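/- (Berra–Carena–Pradolini, fractional maximal case) Let 0<α<n, 1≤p<n/α and let q be defined by 1/q = 1/p − α/n. If u and v are weights on ℝ^n such that u ∈ A_1 and v^{q/p} ∈ A_1, then there exists a positive constant C such that for every f and every t>0, (uv^{q/p})({x ∈ ℝ^n : M_α(fv)(x)/v(x) > t})^{1/q} ≤ (C/t) (∫_{ℝ^n} |f(x)|^p u(x)^{p/q} v(x) dx)^{1/p}, where uv^{q/p} denotes the weight u·v^{q/p}. -/

import Mathlib

open MeasureTheory ENNReal Set

noncomputable section

/-- Euclidean space `ℝ^n`. -/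
abbrev ESp (n : ℕ) := EuclideanSpace ℝ (Fin n)

/-- An axis-parallel cube with positive finite side length. -/
def IsCube {n : ℕ} (Q : Set (ESp n)) : Prop :=
  ∃ (c : Fin n → ℝ) (h : ℝ), 0 < h ∧ Q = {x : ESp n | ∀ i, c i ≤ x i ∧ x i ≤ c i + h}

/-- The measure `w(E) = ∫_E w` associated to a weight `w`. -/
def wMeas {n : ℕ} (w : ESp n → ℝ) (E : Set (ESp n)) : ℝ≥0∞ :=
  ∫⁻ x in E, ENNReal.ofReal (w x)

/-- A weight: a nonnegative locally integrable function, positive (and finite) a.e. -/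
def IsWeight {n : ℕ} (w : ESp n → ℝ) : Prop :=
  Measurable w ∧ (∀ x, 0 ≤ w x) ∧ (∀ᵐ x ∂(volume : Measure (ESp n)), 0 < w x) ∧
    ∀ Q : Set (ESp n), IsCube Q → wMeas w Q < ⊤

/-- `C` is an admissible `A₁` constant for `w`. -/
def A1Const {n : ℕ} (w : ESp n → ℝ) (C : ℝ≥0∞) : Prop :=
  ∀ Q : Set (ESp n), IsCube Q →
    (volume Q)⁻¹ * wMeas w Q ≤ C * essInf (fun x => ENNReal.ofReal (w x)) (volume.restrict Q)

/-- The Muckenhoupt class `A₁`. -/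
def IsA1 {n : ℕ} (w : ESp n → ℝ) : Prop := ∃ C : ℝ≥0∞, C < ⊤ ∧ A1Const w C

/-- The Muckenhoupt class `A_p`, `1 < p < ∞`. -/
def IsAp {n : ℕ} (w : ESp n → ℝ) (p : ℝ) : Prop :=
  ∃ C : ℝ≥0∞, C < ⊤ ∧ ∀ Q : Set (ESp n), IsCube Q →
    ((volume Q)⁻¹ * wMeas w Q) *
      ((volume Q)⁻¹ * ∫⁻ x in Q, ENNReal.ofReal (w x) ^ (1 - p / (p - 1))) ^ (p - 1) ≤ C

/-- The class `A_∞ = ⋃_{p ≥ 1} A_p`. -/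
def IsAinfty {n : ℕ} (w : ESp n → ℝ) : Prop :=
  IsA1 w ∨ ∃ p : ℝ, 1 < p ∧ IsAp w p

/-- The Hardy–Littlewood maximal function (over cubes). -/
def maxFn {n : ℕ} (f : ESp n → ℝ) (x : ESp n) : ℝ≥0∞ :=
  ⨆ (Q : Set (ESp n)) (_ : IsCube Q) (_ : x ∈ Q),
    (volume Q)⁻¹ * ∫⁻ y in Q, ENNReal.ofReal |f y|

/-- The Fujii–Wilson `A_∞` constant. -/
def FW {n : ℕ} (w : ESp n → ℝ) : ℝ≥0∞ :=
  ⨆ (Q : Set (ESp n)) (_ : IsCube Q),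
    (wMeas w Q)⁻¹ * ∫⁻ x in Q, maxFn (Q.indicator w) x

/-- The weighted weak `L^{q,∞}(w)` quasinorm of `g`. -/
def wnorm {n : ℕ} (g : ESp n → ℝ≥0∞) (q : ℝ) (w : ESp n → ℝ) : ℝ≥0∞ :=
  ⨆ (t : ℝ) (_ : 0 < t), ENNReal.ofReal t * (wMeas w {x | ENNReal.ofReal t < g x}) ^ (1 / q)

/-- The weighted `L¹(w)` norm. -/
def L1norm {n : ℕ} (f : ESp n → ℝ) (w : ESp n → ℝ) : ℝ≥0∞ :=
  ∫⁻ x, ENNReal.ofReal (|f x| * w x)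

/-- The fractional maximal operator `M_α`. -/
def fracM {n : ℕ} (α : ℝ) (f : ESp n → ℝ) (x : ESp n) : ℝ≥0∞ :=
  ⨆ (Q : Set (ESp n)) (_ : IsCube Q) (_ : x ∈ Q),
    ((volume Q) ^ (1 - α / (n : ℝ)))⁻¹ * ∫⁻ y in Q, ENNReal.ofReal |f y|

/-- The fractional integral (Riesz potential) `I_α`. -/
def fracI {n : ℕ} (α : ℝ) (f : ESp n → ℝ) (x : ESp n) : ℝ :=
  ∫ y, f y / dist x y ^ ((n : ℝ) - α)

/-- The multi(sub)linear maximal function `𝓜`. -/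
def multiM {n m : ℕ} (f : Fin m → ESp n → ℝ) (x : ESp n) : ℝ≥0∞ :=
  ⨆ (Q : Set (ESp n)) (_ : IsCube Q) (_ : x ∈ Q),
    ∏ i, (volume Q)⁻¹ * ∫⁻ y in Q, ENNReal.ofReal |f i y|

/-- The multi(sub)linear fractional maximal operator `𝓜_α`. -/
def multiMα {n m : ℕ} (α : ℝ) (f : Fin m → ESp n → ℝ) (x : ESp n) : ℝ≥0∞ :=
  ⨆ (Q : Set (ESp n)) (_ : IsCube Q) (_ : x ∈ Q),
    ∏ i, ((volume Q) ^ (1 - α / ((m : ℝ) * (n : ℝ))))⁻¹ * ∫⁻ y in Q, ENNReal.ofReal |f i y|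

/-- The multilinear fractional integral `𝓘_α`. -/
def multiIα {n m : ℕ} (α : ℝ) (f : Fin m → ESp n → ℝ) (x : ESp n) : ℝ :=
  ∫ y : Fin m → ESp n, (∏ i, f i (y i)) / (∑ i, dist x (y i)) ^ ((m : ℝ) * (n : ℝ) - α)

/-- The multilinear class `A_{(1,…,1)}`. -/
def A11 {n m : ℕ} (w : Fin m → ESp n → ℝ) : Prop :=
  ∃ C : ℝ≥0∞, C < ⊤ ∧ ∀ Q : Set (ESp n), IsCube Q →
    ((volume Q)⁻¹ * ∫⁻ x in Q, ENNReal.ofReal (∏ i, w i x ^ ((m : ℝ)⁻¹))) ^ (m : ℝ) *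
      ∏ i, (essInf (fun x => ENNReal.ofReal (w i x)) (volume.restrict Q))⁻¹ ≤ C

/-!
If a cube `B` witnesses `M_α(fv)(x) > t v(x)`, Hölder's inequality with the weights `u` and
`V = v ^ (q / p)`, together with the `A₁` bound `⨍_B V ≤ C V(x)`, turns this into `V(x) < ⨍_B h`
with `h` a multiple of `|fv| ^ p * u ^ (p / q) * v ^ (1 - p) / u`; the powers of `|B|` cancel
because `1 / q = 1 / p - α / n`. This reduces the theorem to the mixed weak-type inequality
`(uV)({V < M h}) ≲ ∫ h u` for the Hardy–Littlewood maximal function.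

For the latter, sort the cubes `B` by the levels `a ^ l` of `essinf_B u` and `a ^ m` of
`essinf_B V`, and the points by the level `a ^ (j + m)` of `V(x)`. As `V ∈ A₁`, the points with a
given `j` fill a fraction `≲ a⁻ʲ` of `B`, so the `A_∞` property of `u` makes their `u`-mass summable
in `j`. For fixed `j`, one Vitali selection compares this mass with the measure of the union of the
cubes, a second one compares that measure with `∫ h`, and the sums over `m` and `l` are geometric.
-/

open Filter Module Metric
open scoped NNReal Topology

/-! ### Positive-radius balls -/

/-- A closed ball of positive radius, recorded through its centre and radius so that covering
arguments can select balls from a family. In the sup norm of `Fin n → ℝ` these are the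
axis-parallel cubes. -/
structure PosBall (X : Type*) where
  center : X
  radius : ℝ
  radius_pos : 0 < radius

namespace PosBall

section Covering

variable {X : Type*} [PseudoMetricSpace X]

instance : CoeOut (PosBall X) (Set X) := ⟨fun B => closedBall B.center B.radius⟩

/-- The concentric ball of five times the radius, as in the Vitali covering lemma. -/
def enlarge (B : PosBall X) : PosBall X where
  center := B.center
  radius := 5 * B.radius
  radius_pos := by linarith [B.radius_pos]

lemma subset_enlarge (B : PosBall X) : (B : Set X) ⊆ B.enlarge :=
  closedBall_subset_closedBall (by simp only [enlarge]; linarith [B.radius_pos])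

lemma nonempty_interior (B : PosBall X) : (interior (B : Set X)).Nonempty :=
  ⟨B.center, ball_subset_interior_closedBall (mem_ball_self B.radius_pos)⟩

lemma measure_ne_top [ProperSpace X] [MeasurableSpace X] (μ : Measure X)
    [IsFiniteMeasureOnCompacts μ] (B : PosBall X) : μ B ≠ ⊤ :=
  measure_closedBall_lt_top.ne

lemma measure_ne_zero [MeasurableSpace X] (μ : Measure X) [μ.IsOpenPosMeasure] (B : PosBall X) :
    μ B ≠ 0 :=
  (measure_closedBall_pos μ B.center B.radius_pos).ne'

variable [SecondCountableTopology X]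

lemma exists_disjoint_covering_enlarge {T : Set (PosBall X)} {R : ℝ}
    (hR : ∀ B ∈ T, B.radius ≤ R) :
    ∃ D ⊆ T, D.Countable ∧ D.PairwiseDisjoint (fun B => (B : Set X)) ∧
      (⋃ B ∈ T, (B : Set X)) ⊆ ⋃ B ∈ D, (B.enlarge : Set X) := by
  obtain ⟨D, hDT, hdisj, hcover⟩ :=
    Vitali.exists_disjoint_subfamily_covering_enlargement_closedBall T center radius R hR 5
      (by norm_num)
  refine ⟨D, hDT, hdisj.countable_of_nonempty_interior fun B _ => B.nonempty_interior, hdisj,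
    iUnion₂_subset fun B hB => ?_⟩
  obtain ⟨B', hB', hsub⟩ := hcover B hB
  exact hsub.trans (subset_biUnion_of_mem (u := fun B : PosBall X => (B.enlarge : Set X)) hB')

variable (X) in
lemma exists_countable_forall_subset : ∃ S : Set (PosBall X), S.Countable ∧
    ∀ B : PosBall X, ∃ B' ∈ S, (B : Set X) ⊆ B' ∧ B'.radius ≤ 2 * B.radius := by
  obtain ⟨s, hs, hdense⟩ := TopologicalSpace.exists_countable_dense X
  have hinj : Function.Injective fun B : PosBall X => (B.center, B.radius) := by
    rintro ⟨c, r, _⟩ ⟨c', r', _⟩ h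
    obtain ⟨rfl, rfl⟩ := Prod.mk.inj h
    rfl
  refine ⟨_, (hs.prod (countable_range ((↑) : ℚ → ℝ))).preimage_of_injOn hinj.injOn, fun B => ?_⟩
  obtain ⟨c, hc, hcs⟩ := hdense.exists_dist_lt B.center (half_pos B.radius_pos)
  obtain ⟨r, hr, hr'⟩ := exists_rat_btwn
    (show 3 / 2 * B.radius < 2 * B.radius by linarith [B.radius_pos])
  refine ⟨⟨c, r, by linarith [B.radius_pos]⟩, ⟨hc, r, rfl⟩, ?_, hr'.le⟩
  exact closedBall_subset_closedBall' (by simp only; linarith)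

end Covering

section Shrink

variable {E : Type*} [NormedAddCommGroup E] [NormedSpace ℝ E]

/-- The image of a ball under the homothety of centre `x` and ratio `2⁻ᵏ`; for `x ∈ B` these
balls play the role of the dyadic cubes around `x` in a Calderón–Zygmund stopping argument. -/
def shrink (B : PosBall E) (x : E) (k : ℕ) : PosBall E where
  center := AffineMap.lineMap x B.center ((1 / 2 : ℝ) ^ k)
  radius := (1 / 2) ^ k * B.radius
  radius_pos := mul_pos (by positivity) B.radius_pos

variable {B : PosBall E} {x : E}

@[simp]
lemma shrink_zero : B.shrink x 0 = B := by
  cases B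
  simp [shrink]

lemma mem_shrink (hx : x ∈ (B : Set E)) (k : ℕ) : x ∈ (B.shrink x k : Set E) := by
  simp only [mem_closedBall, shrink, dist_left_lineMap, norm_pow] at hx ⊢
  norm_num
  exact hx

lemma antitone_shrink (hx : x ∈ (B : Set E)) : Antitone fun k => (B.shrink x k : Set E) := by
  refine antitone_nat_of_succ_le fun k => closedBall_subset_closedBall' ?_
  have hhalf : (1 / 2 : ℝ) ^ (k + 1) - (1 / 2) ^ k = -(1 / 2) ^ (k + 1) := by ring
  have hdist : (1 / 2 : ℝ) ^ (k + 1) * dist x B.center ≤ (1 / 2) ^ (k + 1) * B.radius :=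
    mul_le_mul_of_nonneg_left (mem_closedBall.1 hx) (by positivity)
  simp only [shrink, dist_lineMap_lineMap, Real.dist_eq, hhalf, abs_neg, abs_pow]
  rw [abs_of_pos (by norm_num)]
  linarith [show (1 / 2 : ℝ) ^ k * B.radius = 2 * ((1 / 2) ^ (k + 1) * B.radius) by ring]

lemma shrink_subset (hx : x ∈ (B : Set E)) (k : ℕ) : (B.shrink x k : Set E) ⊆ B := by
  simpa using antitone_shrink hx k.zero_le

lemma radius_shrink_le (k : ℕ) : (B.shrink x k).radius ≤ B.radius :=
  mul_le_of_le_one_left B.radius_pos.le (pow_le_one₀ (by norm_num) (by norm_num))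

end Shrink

variable {E : Type*} [NormedAddCommGroup E] [NormedSpace ℝ E] [FiniteDimensional ℝ E]
  [MeasurableSpace E] [BorelSpace E] (μ : Measure E) [μ.IsAddHaarMeasure]

lemma measure_le_of_radius_le_mul {A B : PosBall E} {c : ℕ} (h : A.radius ≤ c * B.radius) :
    μ A ≤ c ^ finrank ℝ E * μ B := by
  rw [Measure.addHaar_closedBall' μ _ A.radius_pos.le,
    Measure.addHaar_closedBall' μ _ B.radius_pos.le, ← mul_assoc, ← ENNReal.ofReal_natCast,
    ← ENNReal.ofReal_pow c.cast_nonneg, ← ENNReal.ofReal_mul (by positivity), ← mul_pow]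
  gcongr
  exact A.radius_pos.le

lemma measure_enlarge_le (B : PosBall E) : μ B.enlarge ≤ 5 ^ finrank ℝ E * μ B :=
  mod_cast measure_le_of_radius_le_mul μ (c := 5) (by simp [enlarge])

lemma tendsto_shrink_filterAt {B : PosBall E} {x : E} (hx : x ∈ (B : Set E)) :
    Tendsto (fun k => (B.shrink x k : Set E)) atTop
      ((IsUnifLocDoublingMeasure.vitaliFamily μ 1).filterAt x) := by
  refine IsUnifLocDoublingMeasure.tendsto_closedBall_filterAt μ _ _ ?_
    (Eventually.of_forall fun k => by simpa using mem_shrink hx k)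
  refine tendsto_nhdsWithin_iff.2
    ⟨?_, Eventually.of_forall fun k => (B.shrink x k).radius_pos⟩
  simpa [shrink] using (tendsto_pow_atTop_nhds_zero_of_lt_one (r := (1 / 2 : ℝ)) (by norm_num)
    (by norm_num)).mul_const B.radius

end PosBall

/-! ### Calderón–Zygmund stopping balls -/

section StoppingBalls

variable {E : Type*} [NormedAddCommGroup E] [NormedSpace ℝ E] [MeasurableSpace E]
  {μ : Measure E} {f : E → ℝ≥0∞} {B : PosBall E} {l : ℝ≥0∞}

variable (μ f B l) in
/-- The Calderón–Zygmund balls of `f` inside `B`: those on which the mean of `f` is comparable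
to the level `l`. -/
def stoppingBalls : Set (PosBall E) :=
  {A | (A : Set E) ⊆ B ∧ A.radius ≤ B.radius ∧ l * μ A ≤ ∫⁻ x in A, f x ∂μ ∧
    ∫⁻ x in A, f x ∂μ ≤ 2 ^ finrank ℝ E * l * μ A}

variable [FiniteDimensional ℝ E] [BorelSpace E] [μ.IsAddHaarMeasure]

lemma ae_tendsto_lintegral_shrink_div (hf : Measurable f) (hfB : ∫⁻ x in B, f x ∂μ ≠ ⊤) :
    ∀ᵐ x ∂μ, x ∈ (B : Set E) → Tendsto
      (fun k => (∫⁻ y in B.shrink x k, f y ∂μ) / μ (B.shrink x k)) atTop (𝓝 (f x)) := by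
  filter_upwards [(IsUnifLocDoublingMeasure.vitaliFamily μ 1).ae_tendsto_lintegral_div'
    (hf.indicator measurableSet_closedBall) (by rwa [lintegral_indicator measurableSet_closedBall])]
    with x hlim hxB
  have hlim := hlim.comp (PosBall.tendsto_shrink_filterAt μ hxB)
  rw [indicator_of_mem hxB] at hlim
  refine hlim.congr fun k => ?_
  simp only [Function.comp_apply]
  rw [setLIntegral_congr_fun measurableSet_closedBall fun y hy =>
    indicator_of_mem (PosBall.shrink_subset hxB k hy) f]

-- The first `shrink` of `B` around `x` with mean above `l` has a parent with mean at most `l`.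
lemma ae_subset_iUnion_stoppingBalls (hf : Measurable f) (hfB : ∫⁻ x in B, f x ∂μ ≠ ⊤)
    (hl : ∫⁻ x in B, f x ∂μ ≤ l * μ B) :
    (B ∩ {x | l < f x} : Set E) ≤ᵐ[μ] ⋃ A ∈ stoppingBalls μ f B l, (A : Set E) := by
  filter_upwards [ae_tendsto_lintegral_shrink_div hf hfB] with x hlim ⟨hxB, hlx⟩
  have hexists : ∃ k, l < (∫⁻ y in B.shrink x k, f y ∂μ) / μ (B.shrink x k) :=
    ((hlim hxB).eventually (lt_mem_nhds hlx)).exists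
  simp only [ENNReal.lt_div_iff_mul_lt (.inl (PosBall.measure_ne_zero μ _))
    (.inl (PosBall.measure_ne_top μ _))] at hexists
  classical
  obtain ⟨k, hk⟩ : ∃ k, Nat.find hexists = k + 1 :=
    Nat.exists_eq_succ_of_ne_zero fun h0 => hl.not_gt (by simpa [h0] using Nat.find_spec hexists)
  have hparent : ∫⁻ y in B.shrink x k, f y ∂μ ≤ l * μ (B.shrink x k) :=
    not_lt.1 (Nat.find_min hexists (by lia))
  refine mem_biUnion (x := B.shrink x (k + 1)) ⟨PosBall.shrink_subset hxB _,
    PosBall.radius_shrink_le _, (hk ▸ Nat.find_spec hexists).le, ?_⟩ (PosBall.mem_shrink hxB _)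
  calc ∫⁻ y in B.shrink x (k + 1), f y ∂μ
      ≤ ∫⁻ y in B.shrink x k, f y ∂μ :=
        lintegral_mono_set (PosBall.antitone_shrink hxB k.le_succ)
    _ ≤ l * μ (B.shrink x k) := hparent
    _ ≤ l * (2 ^ finrank ℝ E * μ (B.shrink x (k + 1))) := by
        gcongr
        exact mod_cast PosBall.measure_le_of_radius_le_mul μ (c := 2)
          (by simp only [PosBall.shrink]; exact le_of_eq (by push_cast; ring))
    _ = 2 ^ finrank ℝ E * l * μ (B.shrink x (k + 1)) := by ring

end StoppingBalls

lemma setLIntegral_biUnion_le_tsum {α ι : Type*} [MeasurableSpace α] {μ : Measure α} {D : Set ι}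
    (hD : D.Countable) {s : ι → Set α} {f : α → ℝ≥0∞} :
    ∫⁻ x in ⋃ i ∈ D, s i, f x ∂μ ≤ ∑' i : D, ∫⁻ x in s i, f x ∂μ := by
  have := hD.to_subtype
  rw [biUnion_eq_iUnion]
  exact lintegral_iUnion_le _ _

/-! ### `A₁` weights and their `A_∞` decay -/

section BallEssInf

variable {X : Type*} [PseudoMetricSpace X] [MeasurableSpace X] {μ : Measure X} {u : X → ℝ≥0∞}

/-- The essential infimum of `u` over a ball. -/
def ballEssInf (μ : Measure X) (u : X → ℝ≥0∞) (B : PosBall X) : ℝ≥0∞ :=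
  essInf u (μ.restrict B)

lemma ballEssInf_anti {A B : PosBall X} (h : (A : Set X) ⊆ B) :
    ballEssInf μ u B ≤ ballEssInf μ u A :=
  essInf_antitone_measure (Measure.absolutelyContinuous_of_le (Measure.restrict_mono_set μ h))

lemma ballEssInf_mul_measure_le (B : PosBall X) :
    ballEssInf μ u B * μ B ≤ ∫⁻ x in B, u x ∂μ := by
  rw [← setLIntegral_const]
  exact lintegral_mono_ae ae_essInf_le

lemma ae_forall_ballEssInf_le [OpensMeasurableSpace X] {D : Set (PosBall X)} (hD : D.Countable) :
    ∀ᵐ x ∂μ, ∀ B ∈ D, x ∈ (B : Set X) → ballEssInf μ u B ≤ u x :=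
  (ae_ball_iff hD).2 fun _ _ => (ae_restrict_iff' measurableSet_closedBall).1 ae_essInf_le

end BallEssInf

/-- `u` is a Muckenhoupt `A₁` weight with constant `C` with respect to closed balls. -/
structure MuckenhouptA1 {X : Type*} [PseudoMetricSpace X] [MeasurableSpace X] (μ : Measure X)
    (u : X → ℝ≥0∞) (C : ℝ≥0) : Prop where
  measurable : Measurable u
  ae_ne_zero : ∀ᵐ x ∂μ, u x ≠ 0
  ae_ne_top : ∀ᵐ x ∂μ, u x ≠ ⊤
  setLIntegral_le (B : PosBall X) : ∫⁻ x in B, u x ∂μ ≤ C * (ballEssInf μ u B * μ B)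

namespace MuckenhouptA1

section Basic

variable {X : Type*} [PseudoMetricSpace X] [MeasurableSpace X] {μ : Measure X} {u : X → ℝ≥0∞}
  {C : ℝ≥0} (hu : MuckenhouptA1 μ u C) (B : PosBall X)

include hu

lemma ballEssInf_ne_top [μ.IsOpenPosMeasure] : ballEssInf μ u B ≠ ⊤ := fun htop => by
  have hfalse : ∀ᵐ _ ∂μ.restrict B, False := by
    filter_upwards [ae_essInf_le (f := u), ae_restrict_of_ae hu.ae_ne_top] with x hx hx'
    exact hx' (top_le_iff.1 (htop.symm.trans_le hx))
  exact B.measure_ne_zero μ (by simpa using hfalse)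

lemma setLIntegral_ne_top [ProperSpace X] [IsFiniteMeasureOnCompacts μ] [μ.IsOpenPosMeasure] :
    ∫⁻ x in B, u x ∂μ ≠ ⊤ :=
  ne_top_of_le_ne_top (mul_ne_top coe_ne_top
    (mul_ne_top (hu.ballEssInf_ne_top B) (B.measure_ne_top μ))) (hu.setLIntegral_le B)

lemma ballEssInf_ne_zero [μ.IsOpenPosMeasure] : ballEssInf μ u B ≠ 0 := fun hzero => by
  have hint : ∫⁻ x in B, u x ∂μ = 0 := by simpa [hzero] using hu.setLIntegral_le B
  have hfalse : ∀ᵐ _ ∂μ.restrict B, False := by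
    filter_upwards [(lintegral_eq_zero_iff hu.measurable).1 hint,
      ae_restrict_of_ae hu.ae_ne_zero] with x hx hx' using hx' hx
  exact B.measure_ne_zero μ (by simpa using hfalse)

end Basic

variable {E : Type*} [NormedAddCommGroup E] [NormedSpace ℝ E] [FiniteDimensional ℝ E]
  [MeasurableSpace E] [BorelSpace E] {μ : Measure E} [μ.IsAddHaarMeasure] {u : E → ℝ≥0∞}
  {C : ℝ≥0} (hu : MuckenhouptA1 μ u C)

include hu

lemma setLIntegral_enlarge_le (B : PosBall E) :
    ∫⁻ x in B.enlarge, u x ∂μ ≤ C * 5 ^ finrank ℝ E * (ballEssInf μ u B * μ B) :=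
  calc ∫⁻ x in B.enlarge, u x ∂μ
      ≤ C * (ballEssInf μ u B.enlarge * μ B.enlarge) := hu.setLIntegral_le _
    _ ≤ C * (ballEssInf μ u B * (5 ^ finrank ℝ E * μ B)) := by
        gcongr
        exacts [ballEssInf_anti B.subset_enlarge, B.measure_enlarge_le μ]
    _ = C * 5 ^ finrank ℝ E * (ballEssInf μ u B * μ B) := by ring

-- On a stopping ball the essential infimum is comparable to `l`, so a disjoint family of stopping
-- balls lies where `l ≤ C * u`.
lemma setLIntegral_superlevel_le {B : PosBall E} {l : ℝ≥0∞} (hl : ∫⁻ x in B, u x ∂μ ≤ l * μ B) :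
    ∫⁻ x in B ∩ {x | l < u x}, u x ∂μ ≤
      C * 10 ^ finrank ℝ E * l * μ (B ∩ {x | l ≤ C * u x}) := by
  obtain ⟨D, hD, hDc, hdisj, hcover⟩ := PosBall.exists_disjoint_covering_enlarge
    (T := stoppingBalls μ u B l) (R := B.radius) fun A hA => hA.2.1
  have hball : ∀ A ∈ D, ∫⁻ x in A.enlarge, u x ∂μ ≤ C * 10 ^ finrank ℝ E * l * μ A := by
    intro A hA
    calc ∫⁻ x in A.enlarge, u x ∂μ
        ≤ C * 5 ^ finrank ℝ E * (ballEssInf μ u A * μ A) := hu.setLIntegral_enlarge_le A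
      _ ≤ C * 5 ^ finrank ℝ E * (2 ^ finrank ℝ E * l * μ A) := by
          gcongr C * 5 ^ finrank ℝ E * ?_
          exact (ballEssInf_mul_measure_le A).trans (hD hA).2.2.2
      _ = C * (5 * 2) ^ finrank ℝ E * l * μ A := by rw [mul_pow]; ring
      _ = C * 10 ^ finrank ℝ E * l * μ A := by norm_num
  have hlevel : (⋃ A ∈ D, (A : Set E)) ≤ᵐ[μ] (B ∩ {x | l ≤ C * u x} : Set E) := by
    filter_upwards [ae_forall_ballEssInf_le hDc] with x hinf hx
    obtain ⟨A, hA, hxA⟩ := mem_iUnion₂.1 hx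
    have hmean : l * μ A ≤ C * ballEssInf μ u A * μ A := by
      rw [mul_assoc]
      exact (hD hA).2.2.1.trans (hu.setLIntegral_le A)
    have hl_le := (ENNReal.mul_le_mul_iff_left (A.measure_ne_zero μ) (A.measure_ne_top μ)).1 hmean
    exact ⟨(hD hA).1 hxA, hl_le.trans (by gcongr; exact hinf A hA hxA)⟩
  calc ∫⁻ x in B ∩ {x | l < u x}, u x ∂μ
      ≤ ∫⁻ x in ⋃ A ∈ D, (A.enlarge : Set E), u x ∂μ :=
        lintegral_mono' (Measure.restrict_mono_ae ((ae_subset_iUnion_stoppingBalls hu.measurable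
          (hu.setLIntegral_ne_top B) hl).trans hcover.eventuallyLE)) le_rfl
    _ ≤ ∑' A : D, ∫⁻ x in (A : PosBall E).enlarge, u x ∂μ := setLIntegral_biUnion_le_tsum hDc
    _ ≤ ∑' A : D, C * 10 ^ finrank ℝ E * l * μ (A : PosBall E) :=
        ENNReal.tsum_le_tsum fun A => hball A A.2
    _ = C * 10 ^ finrank ℝ E * l * μ (⋃ A ∈ D, (A : Set E)) := by
        rw [ENNReal.tsum_mul_left,
          measure_biUnion hDc hdisj fun A _ => measurableSet_closedBall]
    _ ≤ C * 10 ^ finrank ℝ E * l * μ (B ∩ {x | l ≤ C * u x}) := by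
        gcongr C * 10 ^ finrank ℝ E * l * ?_
        exact measure_mono_ae hlevel

lemma two_mul_setLIntegral_superlevel_le {K : ℝ≥0} (hK : 1 ≤ K)
    (hCK : C * 10 ^ finrank ℝ E ≤ K) {B : PosBall E} {s : ℝ≥0∞} (hs : s ≠ 0) (hs' : s ≠ ⊤)
    (hB : ∫⁻ x in B, u x ∂μ ≤ s * μ B) :
    2 * ∫⁻ x in B ∩ {x | 4 * K ^ 2 * s < u x}, u x ∂μ ≤ 4 * K ^ 2 * s * μ (B ∩ {x | s < u x}) := by
  have hK' : (1 : ℝ≥0∞) ≤ K := mod_cast hK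
  have hK2 : (1 : ℝ≥0∞) ≤ 2 * K := hK'.trans (le_mul_of_one_le_left' one_le_two)
  have hC : (C : ℝ≥0∞) ≤ K := by
    exact_mod_cast (le_mul_of_one_le_right' (one_le_pow₀ (by norm_num))).trans hCK
  have hlevel : {x | 2 * K * s ≤ C * u x} ⊆ {x | s < u x} := fun x hx => by
    have h2s : K * (2 * s) ≤ K * u x :=
      calc K * (2 * s) = 2 * K * s := by ring
        _ ≤ C * u x := hx
        _ ≤ K * u x := by gcongr
    calc s < 2 * s := by simpa [two_mul] using ENNReal.lt_add_right hs' hs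
      _ ≤ u x := (ENNReal.mul_le_mul_iff_right (zero_lt_one.trans_le hK').ne' coe_ne_top).1 h2s
  calc 2 * ∫⁻ x in B ∩ {x | 4 * K ^ 2 * s < u x}, u x ∂μ
      ≤ 2 * ∫⁻ x in B ∩ {x | 2 * K * s < u x}, u x ∂μ := by
        gcongr 2 * ?_
        refine lintegral_mono_set (inter_subset_inter_right _ fun x (hx : _ < u x) =>
          (?_ : 2 * K * s ≤ _).trans_lt hx)
        calc 2 * K * s ≤ 2 * K * (2 * K) * s := by
              gcongr ?_ * s
              exact le_mul_of_one_le_right' hK2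
          _ = 4 * K ^ 2 * s := by ring
    _ ≤ 2 * (C * 10 ^ finrank ℝ E * (2 * K * s) * μ (B ∩ {x | 2 * K * s ≤ C * u x})) := by
        gcongr
        exact hu.setLIntegral_superlevel_le
          (hB.trans (by gcongr; exact le_mul_of_one_le_left' hK2))
    _ ≤ 2 * (K * (2 * K * s) * μ (B ∩ {x | s < u x})) := by
        gcongr
        exact mod_cast hCK
    _ = 4 * K ^ 2 * s * μ (B ∩ {x | s < u x}) := by ring

end MuckenhouptA1

lemma one_add_mul_setLIntegral_superlevel_le {α : Type*} [MeasurableSpace α] {ν : Measure α}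
    {u : α → ℝ≥0∞} (hu : Measurable u) {b s : ℝ≥0∞} (hb : 1 ≤ b)
    (hfin : ∫⁻ x in {x | b * s < u x}, u x ∂ν ≠ ⊤)
    (h : 2 * ∫⁻ x in {x | b * s < u x}, u x ∂ν ≤ b * s * ν {x | s < u x}) :
    (1 + b) * ∫⁻ x in {x | b * s < u x}, u x ∂ν ≤ b * ∫⁻ x in {x | s < u x}, u x ∂ν := by
  have hhigh : MeasurableSet {x | b * s < u x} := measurableSet_lt measurable_const hu
  have hinter : {x | s < u x} ∩ {x | b * s < u x} = {x | b * s < u x} :=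
    inter_eq_right.2 fun x hx => (le_mul_of_one_le_left' hb).trans_lt hx
  have hsplit := lintegral_inter_add_sdiff (μ := ν) u {x | s < u x} hhigh
  have hsplit' := measure_inter_add_sdiff (μ := ν) {x | s < u x} hhigh
  rw [hinter] at hsplit hsplit'
  set middle := {x | s < u x} \ {x | b * s < u x}
  have hhigh_le : b * s * ν {x | b * s < u x} ≤ ∫⁻ x in {x | b * s < u x}, u x ∂ν := by
    rw [← setLIntegral_const]
    exact setLIntegral_mono hu fun x hx => le_of_lt hx
  have hmiddle_le : s * ν middle ≤ ∫⁻ x in middle, u x ∂ν := by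
    rw [← setLIntegral_const]
    exact setLIntegral_mono hu fun x hx => le_of_lt hx.1
  have habsorb : ∫⁻ x in {x | b * s < u x}, u x ∂ν ≤ b * ∫⁻ x in middle, u x ∂ν := by
    refine (ENNReal.add_le_add_iff_left hfin).1 ?_
    calc _ = 2 * ∫⁻ x in {x | b * s < u x}, u x ∂ν := (two_mul _).symm
      _ ≤ b * s * ν {x | s < u x} := h
      _ = b * s * ν {x | b * s < u x} + b * (s * ν middle) := by rw [← hsplit']; ring
      _ ≤ _ := by gcongr
  calc (1 + b) * ∫⁻ x in {x | b * s < u x}, u x ∂ν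
      = ∫⁻ x in {x | b * s < u x}, u x ∂ν + b * ∫⁻ x in {x | b * s < u x}, u x ∂ν := by ring
    _ ≤ b * (∫⁻ x in middle, u x ∂ν) + b * ∫⁻ x in {x | b * s < u x}, u x ∂ν := by gcongr
    _ = b * ∫⁻ x in {x | s < u x}, u x ∂ν := by rw [← hsplit]; ring

/-- A quantitative `A_∞` condition: a subset of a ball `B` of relative measure at most `D * a⁻ʲ`
carries at most the fraction `ε j` of the mass of `u` on `B`. -/
def HasAInftyDecay {X : Type*} [PseudoMetricSpace X] [MeasurableSpace X] (μ : Measure X)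
    (u : X → ℝ≥0∞) (a D : ℝ≥0∞) (ε : ℕ → ℝ≥0∞) : Prop :=
  ∀ (B : PosBall X) (F : Set X) (j : ℕ), F ⊆ B → a ^ j * μ F ≤ D * μ B →
    ∫⁻ x in F, u x ∂μ ≤ ε j * ∫⁻ x in B, u x ∂μ

namespace MuckenhouptA1

variable {E : Type*} [NormedAddCommGroup E] [NormedSpace ℝ E] [FiniteDimensional ℝ E]
  [MeasurableSpace E] [BorelSpace E] {μ : Measure E} [μ.IsAddHaarMeasure] {u : E → ℝ≥0∞}
  {C : ℝ≥0} (hu : MuckenhouptA1 μ u C)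

include hu

lemma exists_superlevel_contraction : ∃ b θ : ℝ≥0, 1 < b ∧ θ < 1 ∧
    ∀ (B : PosBall E) (s : ℝ≥0∞), s ≠ 0 → s ≠ ⊤ → ∫⁻ x in B, u x ∂μ ≤ s * μ B →
      ∫⁻ x in B ∩ {x | b * s < u x}, u x ∂μ ≤ θ * ∫⁻ x in B ∩ {x | s < u x}, u x ∂μ := by
  set K : ℝ≥0 := max 1 (C * 10 ^ finrank ℝ E)
  have hK : 1 ≤ K := le_max_left _ _
  set b : ℝ≥0 := 4 * K ^ 2 with hb_def
  have hb : 1 < b := by nlinarith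
  refine ⟨b, b / (1 + b), hb, (div_lt_one (by positivity)).2 (by simp), fun B s hs hs' hB => ?_⟩
  have hlevel (c : ℝ≥0∞) : (B : Set E) ∩ {x | c < u x} = {x | c < u x} ∩ B := inter_comm _ _
  have hmeas (c : ℝ≥0∞) : MeasurableSet {x | c < u x} :=
    measurableSet_lt measurable_const hu.measurable
  have htwo := hu.two_mul_setLIntegral_superlevel_le hK (le_max_right _ _) hs hs' hB
  have hfin := ne_top_of_le_ne_top (hu.setLIntegral_ne_top B)
    (lintegral_mono_set (inter_subset_left (t := {x | b * s < u x})))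
  have hb_coe : (4 * K ^ 2 : ℝ≥0∞) = b := by simp [hb_def]
  rw [hb_coe] at htwo
  simp only [hlevel, ← Measure.restrict_restrict (hmeas _)] at htwo hfin ⊢
  rw [← Measure.restrict_apply (hmeas _)] at htwo
  have habsorb := one_add_mul_setLIntegral_superlevel_le hu.measurable (mod_cast hb.le) hfin htwo
  rw [ENNReal.coe_div (by positivity), ← ENNReal.mul_div_right_comm,
    ENNReal.le_div_iff_mul_le (by simp) (by simp), mul_comm]
  exact_mod_cast habsorb

lemma exists_geometric_superlevel_decay : ∃ b θ : ℝ≥0, 1 < b ∧ θ < 1 ∧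
    ∀ (B : PosBall E) (i : ℕ), ∫⁻ x in B ∩ {x | b ^ i * (⨍⁻ y in B, u y ∂μ) < u x}, u x ∂μ ≤
      θ ^ i * ∫⁻ x in B, u x ∂μ := by
  obtain ⟨b, θ, hb, hθ, hcontract⟩ := hu.exists_superlevel_contraction
  refine ⟨b, θ, hb, hθ, fun B i => ?_⟩
  set m := ⨍⁻ y in B, u y ∂μ with hm
  have hmul : m * μ B = ∫⁻ x in B, u x ∂μ := by
    rw [mul_comm]
    exact measure_mul_setLAverage u (B.measure_ne_top μ)
  have hint : ∫⁻ x in B, u x ∂μ ≠ 0 := fun h0 => mul_ne_zero (hu.ballEssInf_ne_zero B)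
    (B.measure_ne_zero μ) (le_zero_iff.1 ((ballEssInf_mul_measure_le B).trans h0.le))
  have hm0 : m ≠ 0 := left_ne_zero_of_mul (hmul ▸ hint)
  have hm_top : m ≠ ⊤ := by
    rw [hm, setLAverage_eq]
    exact ENNReal.div_ne_top (hu.setLIntegral_ne_top B) (B.measure_ne_zero μ)
  have hpow (i : ℕ) : (1 : ℝ≥0∞) ≤ b ^ i := one_le_pow₀ (mod_cast hb.le)
  induction i with
  | zero => simpa using lintegral_mono_set inter_subset_left
  | succ i ih =>
    calc ∫⁻ x in B ∩ {x | b ^ (i + 1) * m < u x}, u x ∂μ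
        = ∫⁻ x in B ∩ {x | b * (b ^ i * m) < u x}, u x ∂μ := by simp only [pow_succ', mul_assoc]
      _ ≤ θ * ∫⁻ x in B ∩ {x | b ^ i * m < u x}, u x ∂μ := by
          refine hcontract B _ (mul_ne_zero (zero_lt_one.trans_le (hpow i)).ne' hm0)
            (mul_ne_top (pow_ne_top coe_ne_top) hm_top) ?_
          rw [mul_assoc, hmul]
          exact le_mul_of_one_le_left' (hpow i)
      _ ≤ θ * (θ ^ i * ∫⁻ x in B, u x ∂μ) := by gcongr
      _ = θ ^ (i + 1) * ∫⁻ x in B, u x ∂μ := by ring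

lemma exists_hasAInftyDecay : ∃ a : ℝ≥0, 1 < a ∧
    ∀ D : ℝ≥0, ∃ ε : ℕ → ℝ≥0∞, ∑' j, ε j ≠ ⊤ ∧ HasAInftyDecay μ u a D ε := by
  obtain ⟨b, θ, hb, hθ, hdecay⟩ := hu.exists_geometric_superlevel_decay
  have hb0 : (b : ℝ≥0∞) ≠ 0 := by exact_mod_cast (zero_lt_one.trans hb).ne'
  refine ⟨b ^ 2, one_lt_pow₀ hb two_ne_zero, fun D => ⟨fun j => θ ^ j + D * (b : ℝ≥0∞)⁻¹ ^ j, ?_,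
    fun B F j hFB hF => ?_⟩⟩
  · rw [ENNReal.tsum_add, ENNReal.tsum_mul_left, ENNReal.tsum_geometric, ENNReal.tsum_geometric]
    refine add_ne_top.2 ⟨ENNReal.inv_ne_top.2 (tsub_pos_of_lt (mod_cast hθ)).ne',
      mul_ne_top coe_ne_top (ENNReal.inv_ne_top.2 (tsub_pos_of_lt ?_).ne')⟩
    exact ENNReal.inv_lt_one.2 (mod_cast hb)
  set m := ⨍⁻ y in B, u y ∂μ
  have hmeas : MeasurableSet {x | b ^ j * m < u x} :=
    measurableSet_lt measurable_const hu.measurable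
  have hF' : b ^ j * μ F ≤ D * (b : ℝ≥0∞)⁻¹ ^ j * μ B := by
    rw [← ENNReal.inv_pow, mul_right_comm, ← div_eq_mul_inv,
      ENNReal.le_div_iff_mul_le (.inl (pow_ne_zero _ hb0)) (.inl (pow_ne_top coe_ne_top))]
    calc b ^ j * μ F * b ^ j = (b ^ 2) ^ j * μ F := by ring
      _ ≤ D * μ B := mod_cast hF
  rw [← lintegral_inter_add_sdiff u F hmeas, add_mul]
  gcongr ?_ + ?_
  · exact (lintegral_mono_set (inter_subset_inter_left _ hFB)).trans (hdecay B j)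
  calc ∫⁻ x in F \ {x | b ^ j * m < u x}, u x ∂μ
      ≤ ∫⁻ _ in F \ {x | b ^ j * m < u x}, b ^ j * m ∂μ :=
        setLIntegral_mono measurable_const fun x hx => not_lt.1 hx.2
    _ ≤ ∫⁻ _ in F, b ^ j * m ∂μ := lintegral_mono_set sdiff_subset
    _ = m * (b ^ j * μ F) := by rw [setLIntegral_const]; ring
    _ ≤ m * (D * (b : ℝ≥0∞)⁻¹ ^ j * μ B) := by gcongr
    _ = D * (b : ℝ≥0∞)⁻¹ ^ j * (μ B * m) := by ring
    _ = D * (b : ℝ≥0∞)⁻¹ ^ j * ∫⁻ x in B, u x ∂μ := by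
        rw [measure_mul_setLAverage u (B.measure_ne_top μ)]

end MuckenhouptA1

/-! ### Mixed weak-type inequality for the maximal function -/

section GeometricLayers

variable {a : ℝ≥0∞}

lemma tsum_zpow_ite_le (ha : 1 < a) (ha' : a ≠ ⊤) (y : ℝ≥0∞) :
    ∑' m : ℤ, (if a ^ m ≤ y then a ^ m else 0) ≤ (1 - a⁻¹)⁻¹ * y := by
  have ha0 : a ≠ 0 := (zero_lt_one.trans ha).ne'
  rcases eq_or_ne y 0 with rfl | hy0
  · simp [(ENNReal.zpow_pos ha0 ha' _).ne']
  rcases eq_or_ne y ⊤ with rfl | hy_top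
  · rw [ENNReal.mul_top (ENNReal.inv_ne_zero.2 (sub_ne_top one_ne_top))]
    exact le_top
  obtain ⟨k, hk, hk'⟩ := ENNReal.exists_mem_Ico_zpow hy0 hy_top ha ha'
  have hinj : Function.Injective fun i : ℕ => k - (i : ℤ) := fun i j hij => by simpa using hij
  have hsupp : Function.support (fun m : ℤ => if a ^ m ≤ y then a ^ m else 0) ⊆
      range fun i : ℕ => k - (i : ℤ) := by
    intro m hm
    have hmy : a ^ m ≤ y := by
      by_contra hcon
      simp [hcon] at hm
    have hmk : m < k + 1 := by
      by_contra! hcon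
      exact (hmy.trans_lt hk').not_ge (ENNReal.zpow_le_of_le ha.le hcon)
    exact ⟨(k - m).toNat, by simp only; omega⟩
  rw [← hinj.tsum_eq hsupp]
  calc ∑' i : ℕ, (if a ^ (k - (i : ℤ)) ≤ y then a ^ (k - (i : ℤ)) else 0)
      ≤ ∑' i : ℕ, a ^ k * a⁻¹ ^ i := by
        refine ENNReal.tsum_le_tsum fun i => (ite_le_sup _ _ _).trans ?_
        rw [sub_eq_add_neg, ENNReal.zpow_add ha0 ha', ENNReal.zpow_neg, zpow_natCast,
          ENNReal.inv_pow, sup_of_le_left zero_le]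
    _ = (1 - a⁻¹)⁻¹ * a ^ k := by rw [ENNReal.tsum_mul_left, ENNReal.tsum_geometric, mul_comm]
    _ ≤ (1 - a⁻¹)⁻¹ * y := by gcongr

lemma tsum_zpow_mul_setLIntegral_le {α : Type*} [MeasurableSpace α] {ν : Measure α}
    {g W : α → ℝ≥0∞} (ha : 1 < a) (ha' : a ≠ ⊤) (hg : Measurable g) (hW : Measurable W) :
    ∑' m : ℤ, a ^ m * ∫⁻ x in {x | a ^ m ≤ W x}, g x ∂ν ≤
      (1 - a⁻¹)⁻¹ * ∫⁻ x, g x * W x ∂ν := by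
  have hlevel (m : ℤ) : MeasurableSet {x | a ^ m ≤ W x} := measurableSet_le measurable_const hW
  have hterm (m : ℤ) : a ^ m * ∫⁻ x in {x | a ^ m ≤ W x}, g x ∂ν =
      ∫⁻ x, g x * (if a ^ m ≤ W x then a ^ m else 0) ∂ν := by
    rw [← lintegral_const_mul _ hg, ← lintegral_indicator (hlevel m)]
    refine lintegral_congr fun x => ?_
    by_cases hx : a ^ m ≤ W x <;> simp [hx, mul_comm]
  simp only [hterm]
  have hmeas (m : ℤ) : AEMeasurable (fun x => g x * (if a ^ m ≤ W x then a ^ m else 0)) ν :=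
    (hg.mul (Measurable.ite (hlevel m) measurable_const measurable_const)).aemeasurable
  have hconst : ∫⁻ x, (1 - a⁻¹)⁻¹ * (g x * W x) ∂ν = (1 - a⁻¹)⁻¹ * ∫⁻ x, g x * W x ∂ν :=
    lintegral_const_mul _ (hg.mul hW)
  rw [← lintegral_tsum hmeas, ← hconst]
  refine lintegral_mono fun x => ?_
  rw [ENNReal.tsum_mul_left, mul_left_comm]
  gcongr
  exact tsum_zpow_ite_le ha ha' (W x)

lemma exists_zpow_le_and_pow_mul_zpow_le {y z : ℝ≥0∞} (ha : 1 < a) (ha' : a ≠ ⊤) (hy : y ≠ 0)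
    (hyz : y ≤ z) (hz : z ≠ ⊤) : ∃ (m : ℤ) (j : ℕ), y ∈ Icc (a ^ m) (a * a ^ m) ∧
      z ∈ Icc (a ^ j * a ^ m) (a ^ (j + 1) * a ^ m) := by
  have ha0 : a ≠ 0 := (zero_lt_one.trans ha).ne'
  obtain ⟨m, hm, hm'⟩ := ENNReal.exists_mem_Ico_zpow hy (ne_top_of_le_ne_top hz hyz) ha ha'
  obtain ⟨k, hk, hk'⟩ := ENNReal.exists_mem_Ico_zpow
    (ne_bot_of_le_ne_bot hy hyz) hz ha ha'
  have hmk : m < k + 1 := by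
    by_contra! hcon
    exact ((hm.trans hyz).trans_lt hk').not_ge (ENNReal.zpow_le_of_le ha.le hcon)
  obtain ⟨j, rfl⟩ : ∃ j : ℕ, k = j + m := ⟨(k - m).toNat, by omega⟩
  have hj : a ^ ((j : ℤ) + m + 1) = a ^ (j + 1) * a ^ m := by
    rw [add_right_comm, ENNReal.zpow_add ha0 ha', ← zpow_natCast a (j + 1), Nat.cast_succ]
  rw [ENNReal.zpow_add ha0 ha', zpow_natCast] at hk
  rw [ENNReal.zpow_add ha0 ha', zpow_one, mul_comm] at hm'
  exact ⟨m, j, ⟨hm, hm'.le⟩, hk, hj ▸ hk'.le⟩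

end GeometricLayers

section MaximalSuperlevel

variable {X : Type*} [PseudoMetricSpace X] [MeasurableSpace X]

/-- The set `{x | V x < M_S h x}`, where `M_S h` is the maximal function of `h` over the balls
of the family `S`. -/
def maximalSuperlevel (μ : Measure X) (S : Set (PosBall X)) (h V : X → ℝ≥0∞) : Set X :=
  {x | ∃ B ∈ S, x ∈ (B : Set X) ∧ V x * μ B < ∫⁻ y in B, h y ∂μ}

/-- The balls of `S` on which `V` has essential infimum about `aᵐ` while `h` has average at least
`aʲ * aᵐ`. -/
def levelBalls (μ : Measure X) (h V : X → ℝ≥0∞) (a : ℝ≥0∞) (S : Set (PosBall X)) (j : ℕ) (m : ℤ) :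
    Set (PosBall X) :=
  {B ∈ S | ballEssInf μ V B ∈ Icc (a ^ m) (a * a ^ m) ∧ a ^ j * a ^ m * μ B ≤ ∫⁻ y in B, h y ∂μ}

end MaximalSuperlevel

namespace MuckenhouptA1

section Levels

variable {X : Type*} [PseudoMetricSpace X] [MeasurableSpace X] {μ : Measure X} {h u V : X → ℝ≥0∞}
  {C : ℝ≥0} {S : Set (PosBall X)} {a : ℝ≥0∞}

lemma mul_measure_inter_superlevel_le (hV : MuckenhouptA1 μ V C) {B : PosBall X}
    {M b c : ℝ≥0∞} (hM : M ≠ 0) (hM' : M ≠ ⊤) (hB : ballEssInf μ V B ≤ b * M) :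
    c * μ (B ∩ {x | c * M ≤ V x}) ≤ C * b * μ B := by
  have hlevel : MeasurableSet {x | c * M ≤ V x} := measurableSet_le measurable_const hV.measurable
  refine (ENNReal.mul_le_mul_iff_right hM hM').1 ?_
  calc M * (c * μ (B ∩ {x | c * M ≤ V x}))
      = c * M * μ.restrict B {x | c * M ≤ V x} := by
        rw [Measure.restrict_apply hlevel, inter_comm]; ring
    _ ≤ ∫⁻ x in B, V x ∂μ := mul_meas_ge_le_lintegral hV.measurable _
    _ ≤ C * (b * M * μ B) := (hV.setLIntegral_le B).trans (by gcongr)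
    _ = M * (C * b * μ B) := by ring

variable [μ.IsOpenPosMeasure]

lemma maximalSuperlevel_ae_le_iUnion_levelBalls [OpensMeasurableSpace X]
    (hV : MuckenhouptA1 μ V C) (ha : 1 < a) (ha' : a ≠ ⊤) (hS : S.Countable) :
    maximalSuperlevel μ S h V ≤ᵐ[μ]
      (⋃ (j : ℕ) (m : ℤ), (⋃ B ∈ levelBalls μ h V a S j m, (B : Set X)) ∩
        V ⁻¹' Icc (a ^ j * a ^ m) (a ^ (j + 1) * a ^ m) : Set X) := by
  filter_upwards [ae_forall_ballEssInf_le (μ := μ) (u := V) hS, hV.ae_ne_top] with x hx hx_top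
  rintro ⟨B, hB, hxB, hlt⟩
  obtain ⟨m, j, hm, hj⟩ := exists_zpow_le_and_pow_mul_zpow_le ha ha' (hV.ballEssInf_ne_zero B)
    (hx B hB hxB) hx_top
  have hh : a ^ j * a ^ m * μ B ≤ ∫⁻ y in B, h y ∂μ := (mul_le_mul_left hj.1 _).trans hlt.le
  exact mem_iUnion₂_of_mem (i := j) (j := m) ⟨mem_biUnion ⟨hB, hm, hh⟩ hxB, hj⟩

lemma maximalSuperlevel_subset_iUnion (hu : MuckenhouptA1 μ u C) (ha : 1 < a) (ha' : a ≠ ⊤) :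
    maximalSuperlevel μ S h V ⊆
      ⋃ l : ℤ, maximalSuperlevel μ {B ∈ S | ballEssInf μ u B ∈ Icc (a ^ l) (a * a ^ l)} h V := by
  rintro x ⟨B, hB, hx⟩
  obtain ⟨l, -, hl, -⟩ := exists_zpow_le_and_pow_mul_zpow_le ha ha' (hu.ballEssInf_ne_zero B)
    le_rfl (hu.ballEssInf_ne_top B)
  exact mem_iUnion_of_mem l ⟨B, ⟨hB, hl⟩, hx⟩

end Levels

variable {E : Type*} [NormedAddCommGroup E] [NormedSpace ℝ E] [FiniteDimensional ℝ E]
  [MeasurableSpace E] [BorelSpace E] {μ : Measure E} [μ.IsAddHaarMeasure] {h u V : E → ℝ≥0∞}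
  {Cu Cv : ℝ≥0} {T S : Set (PosBall E)} {R : ℝ} {a L M : ℝ≥0∞} {ε : ℕ → ℝ≥0∞}

lemma mul_setLIntegral_biUnion_le (hV : MuckenhouptA1 μ V Cv) (hR : ∀ B ∈ T, B.radius ≤ R)
    (hL : ∀ B ∈ T, L ≤ ballEssInf μ u B) {b c : ℝ≥0∞}
    (hT : ∀ B ∈ T, b * (ballEssInf μ V B * μ B) ≤ c * ∫⁻ x in B, h x ∂μ) :
    b * ∫⁻ x in ⋃ B ∈ T, (B : Set E), V x ∂μ ≤
      Cv * 5 ^ finrank ℝ E * c * ∫⁻ x in {x | L ≤ u x}, h x ∂μ := by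
  obtain ⟨D, hDT, hD, hdisj, hcover⟩ := PosBall.exists_disjoint_covering_enlarge hR
  have hsub : (⋃ B ∈ D, (B : Set E)) ≤ᵐ[μ] ({x | L ≤ u x} : Set E) := by
    filter_upwards [ae_forall_ballEssInf_le (μ := μ) (u := u) hD] with x hx hxD
    obtain ⟨B, hB, hxB⟩ := mem_iUnion₂.1 hxD
    exact (hL B (hDT hB)).trans (hx B hB hxB)
  calc b * ∫⁻ x in ⋃ B ∈ T, (B : Set E), V x ∂μ
      ≤ b * ∑' B : D, ∫⁻ x in (B : PosBall E).enlarge, V x ∂μ := by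
        gcongr
        exact (lintegral_mono_set hcover).trans (setLIntegral_biUnion_le_tsum hD)
    _ ≤ b * ∑' B : D, Cv * 5 ^ finrank ℝ E * (ballEssInf μ V B * μ B) := by
        gcongr with B
        exact hV.setLIntegral_enlarge_le B
    _ = Cv * 5 ^ finrank ℝ E * ∑' B : D, b * (ballEssInf μ V B * μ B) := by
        simp only [ENNReal.tsum_mul_left]; ring
    _ ≤ Cv * 5 ^ finrank ℝ E * ∑' B : D, c * ∫⁻ x in B, h x ∂μ := by
        gcongr _ * ∑' B : D, ?_ with B
        exact hT B (hDT B.2)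
    _ = Cv * 5 ^ finrank ℝ E * c * ∫⁻ x in ⋃ B ∈ D, (B : Set E), h x ∂μ := by
        rw [ENNReal.tsum_mul_left, ← mul_assoc,
          lintegral_biUnion hD (fun B _ => measurableSet_closedBall) hdisj]
    _ ≤ Cv * 5 ^ finrank ℝ E * c * ∫⁻ x in {x | L ≤ u x}, h x ∂μ := by
        gcongr Cv * 5 ^ finrank ℝ E * c * ?_
        exact lintegral_mono' (Measure.restrict_mono_ae hsub) le_rfl

lemma setLIntegral_mul_enlarge_inter_le (hu : MuckenhouptA1 μ u Cu) (hV : MuckenhouptA1 μ V Cv)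
    (hε : HasAInftyDecay μ u a (Cv * a) ε) (hM : M ≠ 0) (hM' : M ≠ ⊤) {B : PosBall E}
    (huB : ballEssInf μ u B ≤ a * L) (hVB : ballEssInf μ V B ≤ a * M) (j : ℕ) :
    ∫⁻ x in B.enlarge ∩ V ⁻¹' Icc (a ^ j * M) (a ^ (j + 1) * M), u x * V x ∂μ ≤
      ε j * (Cu * 5 ^ finrank ℝ E * a ^ 2 * L) * (a ^ j * M) * μ B := by
  set F := (B.enlarge : Set E) ∩ V ⁻¹' Icc (a ^ j * M) (a ^ (j + 1) * M)
  have hF : MeasurableSet F := measurableSet_closedBall.inter (hV.measurable measurableSet_Icc)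
  have hsmall : a ^ j * μ F ≤ Cv * a * μ B.enlarge :=
    calc a ^ j * μ F ≤ a ^ j * μ (B.enlarge ∩ {x | a ^ j * M ≤ V x}) := by
          gcongr
          exact fun x hx => ⟨hx.1, hx.2.1⟩
      _ ≤ Cv * a * μ B.enlarge := hV.mul_measure_inter_superlevel_le hM hM'
          ((ballEssInf_anti B.subset_enlarge).trans hVB)
  calc ∫⁻ x in F, u x * V x ∂μ ≤ ∫⁻ x in F, a ^ (j + 1) * M * u x ∂μ := by
        refine setLIntegral_mono' hF fun x hx => ?_
        rw [mul_comm]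
        gcongr
        exact hx.2.2
    _ = a ^ (j + 1) * M * ∫⁻ x in F, u x ∂μ := lintegral_const_mul _ hu.measurable
    _ ≤ a ^ (j + 1) * M * (ε j * (Cu * 5 ^ finrank ℝ E * (a * L * μ B))) := by
        gcongr
        refine (hε B.enlarge F j inter_subset_left hsmall).trans ?_
        gcongr
        exact (hu.setLIntegral_enlarge_le B).trans (by gcongr)
    _ = ε j * (Cu * 5 ^ finrank ℝ E * a ^ 2 * L) * (a ^ j * M) * μ B := by ring

lemma setLIntegral_mul_biUnion_inter_le (hu : MuckenhouptA1 μ u Cu) (hV : MuckenhouptA1 μ V Cv)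
    (hε : HasAInftyDecay μ u a (Cv * a) ε) (hM : M ≠ 0) (hM' : M ≠ ⊤)
    (hR : ∀ B ∈ T, B.radius ≤ R) (hu_le : ∀ B ∈ T, ballEssInf μ u B ≤ a * L)
    (hV_le : ∀ B ∈ T, ballEssInf μ V B ≤ a * M) (j : ℕ) :
    ∫⁻ x in (⋃ B ∈ T, (B : Set E)) ∩ V ⁻¹' Icc (a ^ j * M) (a ^ (j + 1) * M), u x * V x ∂μ ≤
      ε j * (Cu * 5 ^ finrank ℝ E * a ^ 2 * L) * (a ^ j * M) * μ (⋃ B ∈ T, (B : Set E)) := by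
  obtain ⟨D, hDT, hD, hdisj, hcover⟩ := PosBall.exists_disjoint_covering_enlarge hR
  set W := V ⁻¹' Icc (a ^ j * M) (a ^ (j + 1) * M)
  set K := ε j * (Cu * 5 ^ finrank ℝ E * a ^ 2 * L) * (a ^ j * M)
  calc ∫⁻ x in (⋃ B ∈ T, (B : Set E)) ∩ W, u x * V x ∂μ
      ≤ ∫⁻ x in ⋃ B ∈ D, (B.enlarge ∩ W : Set E), u x * V x ∂μ := by
        refine lintegral_mono_set ?_
        rw [← iUnion₂_inter]
        exact inter_subset_inter_left _ hcover
    _ ≤ ∑' B : D, ∫⁻ x in (B : PosBall E).enlarge ∩ W, u x * V x ∂μ :=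
        setLIntegral_biUnion_le_tsum hD
    _ ≤ ∑' B : D, K * μ B := ENNReal.tsum_le_tsum fun B =>
        hu.setLIntegral_mul_enlarge_inter_le hV hε hM hM' (hu_le B (hDT B.2))
          (hV_le B (hDT B.2)) j
    _ = K * μ (⋃ B ∈ D, (B : Set E)) := by
        rw [ENNReal.tsum_mul_left, measure_biUnion hD hdisj fun B _ => measurableSet_closedBall]
    _ ≤ K * μ (⋃ B ∈ T, (B : Set E)) :=
        mul_le_mul_right (measure_mono (biUnion_subset_biUnion_left hDT)) _

lemma tsum_zpow_mul_measure_levelBalls_le (hV : MuckenhouptA1 μ V Cv) (ha : 1 < a) (ha' : a ≠ ⊤)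
    (hS : S.Countable) (hR : ∀ B ∈ S, B.radius ≤ R) (hL : ∀ B ∈ S, L ≤ ballEssInf μ u B) (j : ℕ) :
    ∑' m : ℤ, a ^ j * a ^ m * μ (⋃ B ∈ levelBalls μ h V a S j m, (B : Set E)) ≤
      (1 - a⁻¹)⁻¹ * (Cv * 5 ^ finrank ℝ E * a) * ∫⁻ x in {x | L ≤ u x}, h x ∂μ := by
  set T := ⋃ m, levelBalls μ h V a S j m
  have hTS : T ⊆ S := iUnion_subset fun m => sep_subset _ _
  set G := ⋃ B ∈ T, (B : Set E)
  have hG : a ^ j * ∫⁻ x in G, V x ∂μ ≤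
      Cv * 5 ^ finrank ℝ E * a * ∫⁻ x in {x | L ≤ u x}, h x ∂μ := by
    refine hV.mul_setLIntegral_biUnion_le (fun B hB => hR B (hTS hB)) (fun B hB => hL B (hTS hB))
      fun B hB => ?_
    obtain ⟨m, -, ⟨-, hVB⟩, hhB⟩ := mem_iUnion.1 hB
    calc a ^ j * (ballEssInf μ V B * μ B) ≤ a ^ j * (a * a ^ m * μ B) := by gcongr
      _ = a * (a ^ j * a ^ m * μ B) := by ring
      _ ≤ a * ∫⁻ x in B, h x ∂μ := by gcongr
  have hm (m : ℤ) : μ (⋃ B ∈ levelBalls μ h V a S j m, (B : Set E)) ≤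
      ∫⁻ _ in {x | a ^ m ≤ V x}, 1 ∂(μ.restrict G) := by
    rw [setLIntegral_one, Measure.restrict_apply (measurableSet_le measurable_const hV.measurable)]
    refine measure_mono_ae ?_
    filter_upwards [ae_forall_ballEssInf_le (μ := μ) (u := V) hS] with x hx hxm
    obtain ⟨B, hB, hxB⟩ := mem_iUnion₂.1 hxm
    exact ⟨hB.2.1.1.trans (hx B hB.1 hxB), mem_biUnion (mem_iUnion_of_mem m hB) hxB⟩
  calc ∑' m : ℤ, a ^ j * a ^ m * μ (⋃ B ∈ levelBalls μ h V a S j m, (B : Set E))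
      ≤ ∑' m : ℤ, a ^ j * (a ^ m * ∫⁻ _ in {x | a ^ m ≤ V x}, 1 ∂(μ.restrict G)) := by
        simp only [mul_assoc]
        gcongr with m
        exact hm m
    _ ≤ a ^ j * ((1 - a⁻¹)⁻¹ * ∫⁻ x in G, 1 * V x ∂μ) := by
        rw [ENNReal.tsum_mul_left]
        gcongr
        exact tsum_zpow_mul_setLIntegral_le ha ha' measurable_const hV.measurable
    _ = (1 - a⁻¹)⁻¹ * (a ^ j * ∫⁻ x in G, V x ∂μ) := by simp only [one_mul]; ring
    _ ≤ (1 - a⁻¹)⁻¹ * (Cv * 5 ^ finrank ℝ E * a * ∫⁻ x in {x | L ≤ u x}, h x ∂μ) := by gcongr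
    _ = (1 - a⁻¹)⁻¹ * (Cv * 5 ^ finrank ℝ E * a) * ∫⁻ x in {x | L ≤ u x}, h x ∂μ := by ring

lemma setLIntegral_maximalSuperlevel_le_of_ballEssInf_mem_Icc (hu : MuckenhouptA1 μ u Cu)
    (hV : MuckenhouptA1 μ V Cv) (ha : 1 < a) (ha' : a ≠ ⊤)
    (hε : HasAInftyDecay μ u a (Cv * a) ε) (hS : S.Countable) (hR : ∀ B ∈ S, B.radius ≤ R)
    (hL : ∀ B ∈ S, ballEssInf μ u B ∈ Icc L (a * L)) :
    ∫⁻ x in maximalSuperlevel μ S h V, u x * V x ∂μ ≤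
      (∑' j, ε j) * (Cu * 5 ^ finrank ℝ E * a ^ 2) *
        ((1 - a⁻¹)⁻¹ * (Cv * 5 ^ finrank ℝ E * a)) *
          (L * ∫⁻ x in {x | L ≤ u x}, h x ∂μ) := by
  have ha0 : a ≠ 0 := (zero_lt_one.trans ha).ne'
  have hT (j : ℕ) (m : ℤ) : levelBalls μ h V a S j m ⊆ S := sep_subset _ _
  set c := Cu * 5 ^ finrank ℝ E * a ^ 2
  set U := fun (j : ℕ) (m : ℤ) => ⋃ B ∈ levelBalls μ h V a S j m, (B : Set E)
  set I := ∫⁻ x in {x | L ≤ u x}, h x ∂μ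
  calc ∫⁻ x in maximalSuperlevel μ S h V, u x * V x ∂μ
      ≤ ∑' (j : ℕ) (m : ℤ), ∫⁻ x in U j m ∩ V ⁻¹' Icc (a ^ j * a ^ m) (a ^ (j + 1) * a ^ m),
          u x * V x ∂μ := by
        refine (lintegral_mono' (Measure.restrict_mono_ae
          (hV.maximalSuperlevel_ae_le_iUnion_levelBalls ha ha' hS)) le_rfl).trans ?_
        refine (lintegral_iUnion_le _ _).trans (ENNReal.tsum_le_tsum fun j => ?_)
        exact lintegral_iUnion_le _ _
    _ ≤ ∑' (j : ℕ) (m : ℤ), ε j * (c * L) * (a ^ j * a ^ m) * μ (U j m) := by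
        gcongr with j m
        exact hu.setLIntegral_mul_biUnion_inter_le hV hε (ENNReal.zpow_pos ha0 ha' m).ne'
          (ENNReal.zpow_ne_top ha0 ha' m) (fun B hB => hR B (hT j m hB))
          (fun B hB => (hL B (hT j m hB)).2) (fun B hB => hB.2.1.2) j
    _ ≤ ∑' j : ℕ, ε j * (c * L) * ((1 - a⁻¹)⁻¹ * (Cv * 5 ^ finrank ℝ E * a) * I) := by
        gcongr with j
        simp only [mul_assoc (ε j * (c * L)), ENNReal.tsum_mul_left]
        gcongr
        exact hV.tsum_zpow_mul_measure_levelBalls_le ha ha' hS hR (fun B hB => (hL B hB).1) j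
    _ = (∑' j, ε j) * c * ((1 - a⁻¹)⁻¹ * (Cv * 5 ^ finrank ℝ E * a)) * (L * I) := by
        simp only [ENNReal.tsum_mul_right]; ring

lemma setLIntegral_maximalSuperlevel_le_of_bounded (hu : MuckenhouptA1 μ u Cu)
    (hV : MuckenhouptA1 μ V Cv) (ha : 1 < a) (ha' : a ≠ ⊤) (hε : HasAInftyDecay μ u a (Cv * a) ε)
    (hh : Measurable h) (hS : S.Countable) (hR : ∀ B ∈ S, B.radius ≤ R) :
    ∫⁻ x in maximalSuperlevel μ S h V, u x * V x ∂μ ≤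
      (∑' j, ε j) * (Cu * 5 ^ finrank ℝ E * a ^ 2) *
        ((1 - a⁻¹)⁻¹ * (Cv * 5 ^ finrank ℝ E * a)) * (1 - a⁻¹)⁻¹ * ∫⁻ x, h x * u x ∂μ := by
  set K := (∑' j, ε j) * (Cu * 5 ^ finrank ℝ E * a ^ 2) *
    ((1 - a⁻¹)⁻¹ * (Cv * 5 ^ finrank ℝ E * a))
  calc ∫⁻ x in maximalSuperlevel μ S h V, u x * V x ∂μ
      ≤ ∑' l : ℤ, ∫⁻ x in maximalSuperlevel μ
          {B ∈ S | ballEssInf μ u B ∈ Icc (a ^ l) (a * a ^ l)} h V, u x * V x ∂μ :=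
        (lintegral_mono_set (hu.maximalSuperlevel_subset_iUnion ha ha')).trans
          (lintegral_iUnion_le _ _)
    _ ≤ ∑' l : ℤ, K * (a ^ l * ∫⁻ x in {x | a ^ l ≤ u x}, h x ∂μ) := by
        gcongr with l
        exact hu.setLIntegral_maximalSuperlevel_le_of_ballEssInf_mem_Icc hV ha ha' hε
          (hS.mono (sep_subset _ _)) (fun B hB => hR B hB.1) fun B hB => hB.2
    _ ≤ K * ((1 - a⁻¹)⁻¹ * ∫⁻ x, h x * u x ∂μ) := by
        rw [ENNReal.tsum_mul_left]
        gcongr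
        exact tsum_zpow_mul_setLIntegral_le ha ha' hh hu.measurable
    _ = K * (1 - a⁻¹)⁻¹ * ∫⁻ x, h x * u x ∂μ := (mul_assoc _ _ _).symm

theorem exists_setLIntegral_maximalSuperlevel_le (hu : MuckenhouptA1 μ u Cu)
    (hV : MuckenhouptA1 μ V Cv) : ∃ K : ℝ≥0∞, K ≠ ⊤ ∧
      ∀ (h : E → ℝ≥0∞) (S : Set (PosBall E)), Measurable h → S.Countable →
        ∫⁻ x in maximalSuperlevel μ S h V, u x * V x ∂μ ≤ K * ∫⁻ x, h x * u x ∂μ := by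
  obtain ⟨a, ha, hdecay⟩ := hu.exists_hasAInftyDecay
  obtain ⟨ε, hε, hdecay⟩ := hdecay (Cv * a)
  rw [ENNReal.coe_mul] at hdecay
  have ha1 : (1 : ℝ≥0∞) < a := mod_cast ha
  have hinv : (1 - (a : ℝ≥0∞)⁻¹)⁻¹ ≠ ⊤ :=
    inv_ne_top.2 (tsub_pos_of_lt (ENNReal.inv_lt_one.2 ha1)).ne'
  refine ⟨(∑' j, ε j) * (Cu * 5 ^ finrank ℝ E * a ^ 2) * ((1 - (a : ℝ≥0∞)⁻¹)⁻¹ *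
    (Cv * 5 ^ finrank ℝ E * a)) * (1 - (a : ℝ≥0∞)⁻¹)⁻¹, by finiteness, fun h S hh hS => ?_⟩
  have hunion : maximalSuperlevel μ S h V =
      ⋃ N : ℕ, maximalSuperlevel μ {B ∈ S | B.radius ≤ N} h V := by
    refine subset_antisymm ?_ (iUnion_subset fun N x => ?_)
    · rintro x ⟨B, hB, hx⟩
      obtain ⟨N, hN⟩ := exists_nat_ge B.radius
      exact mem_iUnion_of_mem N ⟨B, ⟨hB, hN⟩, hx⟩
    · rintro ⟨B, hB, hx⟩
      exact ⟨B, hB.1, hx⟩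
  have hmono : Monotone fun N : ℕ => maximalSuperlevel μ {B ∈ S | B.radius ≤ N} h V := by
    rintro N N' hN x ⟨B, hB, hx⟩
    exact ⟨B, ⟨hB.1, hB.2.trans (mod_cast hN)⟩, hx⟩
  rw [hunion, setLIntegral_iUnion_of_directed _ hmono.directed_le]
  exact iSup_le fun N => hu.setLIntegral_maximalSuperlevel_le_of_bounded hV ha1 coe_ne_top hdecay
    hh (hS.mono (sep_subset _ _)) fun B hB => hB.2

end MuckenhouptA1

/-! ### Fractional maximal function -/

/-- The weight `u ^ (p / q) * v ^ (1 - p)`, expressed through `V = v ^ (q / p)`: integrating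
`(f v) ^ p` against it gives the integral of `f ^ p * u ^ (p / q) * v`. -/
def fracWeight {X : Type*} (p q : ℝ) (u V : X → ℝ≥0∞) (x : X) : ℝ≥0∞ :=
  (u x * V x ^ (1 - p)) ^ (p / q)

@[fun_prop]
lemma measurable_fracWeight {X : Type*} [MeasurableSpace X] {u V : X → ℝ≥0∞} {p q : ℝ}
    (hu : Measurable u) (hV : Measurable V) : Measurable (fracWeight p q u V) :=
  (hu.mul (hV.pow_const _)).pow_const _

/-- The exponent relation `1 / q = 1 / p - β` of the Hardy–Littlewood–Sobolev scale, with `1 ≤ p`,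
`0 < q` and `0 ≤ β`; in dimension `n` the order of the fractional operator is `β * n`. -/
structure SobolevExponents (p q β : ℝ) : Prop where
  one_le_p : 1 ≤ p
  q_pos : 0 < q
  β_nonneg : 0 ≤ β
  inv_add_eq : q⁻¹ + β = p⁻¹

namespace SobolevExponents

variable {p q β : ℝ}

lemma of_mul_lt {α n : ℝ} (hα : 0 ≤ α) (hp : 1 ≤ p) (hαp : α * p < n)
    (hq : 1 / q = 1 / p - α / n) : SobolevExponents p q (α / n) := by
  have hp₀ : 0 < p := zero_lt_one.trans_le hp
  have hn : 0 < n := (mul_nonneg hα hp₀.le).trans_lt hαp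
  have hlt : α / n < 1 / p := by rwa [div_lt_div_iff₀ hn hp₀, one_mul]
  exact ⟨hp, one_div_pos.1 (hq ▸ sub_pos.2 hlt), div_nonneg hα hn.le, by
    simp only [← one_div, hq, sub_add_cancel]⟩

lemma p_pos (h : SobolevExponents p q β) : 0 < p := zero_lt_one.trans_le h.one_le_p

lemma β_le_one (h : SobolevExponents p q β) : β ≤ 1 := by
  have := inv_le_one_of_one_le₀ h.one_le_p
  have := inv_pos.2 h.q_pos
  linarith [h.inv_add_eq]

lemma div_add_mul_eq_one (h : SobolevExponents p q β) : p / q + p * β = 1 := by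
  rw [div_eq_mul_inv, ← mul_add, h.inv_add_eq, mul_inv_cancel₀ h.p_pos.ne']

lemma sub_one_div_nonneg (h : SobolevExponents p q β) : 0 ≤ (p - 1) / q :=
  div_nonneg (sub_nonneg.2 h.one_le_p) h.q_pos.le

lemma sub_one_mul_nonneg (h : SobolevExponents p q β) : 0 ≤ (p - 1) * β :=
  mul_nonneg (sub_nonneg.2 h.one_le_p) h.β_nonneg

lemma eq_mul_rpow_mul_rpow (h : SobolevExponents p q β) (F : ℝ≥0∞) {u V : ℝ≥0∞} (hu₀ : u ≠ 0)
    (hu : u ≠ ⊤) (hV₀ : V ≠ 0) (hV : V ≠ ⊤) :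
    F = (F ^ p * (u * V ^ (1 - p)) ^ (p / q) / u) ^ q⁻¹ *
      (F ^ p * (u * V ^ (1 - p)) ^ (p / q)) ^ β * V ^ ((p - 1) / q) := by
  have hq : 0 ≤ q⁻¹ := (inv_pos.2 h.q_pos).le
  have hweights : (u * V ^ (1 - p)) * (u⁻¹ * V ^ (p - 1)) = 1 := by
    rw [mul_mul_mul_comm, ENNReal.mul_inv_cancel hu₀ hu, ← rpow_add _ _ hV₀ hV]
    simp
  have hexp : p / q * p⁻¹ = q⁻¹ := by
    have := h.p_pos
    field_simp
  set ρ := u * V ^ (1 - p)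
  calc F = F * (ρ * (u⁻¹ * V ^ (p - 1))) ^ q⁻¹ := by rw [hweights, one_rpow, mul_one]
    _ = (F ^ p * ρ ^ (p / q)) ^ p⁻¹ * (u⁻¹ * V ^ (p - 1)) ^ q⁻¹ := by
      rw [mul_rpow_of_nonneg ρ _ hq, mul_rpow_of_nonneg _ _ (inv_pos.2 h.p_pos).le,
        rpow_rpow_inv h.p_pos.ne', ← rpow_mul, hexp, mul_assoc]
    _ = (F ^ p * ρ ^ (p / q)) ^ (q⁻¹ + β) * (u⁻¹ ^ q⁻¹ * V ^ ((p - 1) / q)) := by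
      rw [h.inv_add_eq, mul_rpow_of_nonneg _ _ hq, ← rpow_mul, ← div_eq_mul_inv]
    _ = _ := by
      rw [rpow_add_of_nonneg _ _ hq h.β_nonneg, ENNReal.div_eq_inv_mul (b := u),
        mul_rpow_of_nonneg u⁻¹ _ hq]
      ring

lemma lintegral_le_of_holder {Ω : Type*} [MeasurableSpace Ω] {ν : Measure Ω}
    (h : SobolevExponents p q β) {F u V : Ω → ℝ≥0∞} (hF : AEMeasurable F ν) (hu : AEMeasurable u ν)
    (hV : AEMeasurable V ν) (hu_zero : ∀ᵐ x ∂ν, u x ≠ 0) (hu_top : ∀ᵐ x ∂ν, u x ≠ ⊤)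
    (hV_zero : ∀ᵐ x ∂ν, V x ≠ 0) (hV_top : ∀ᵐ x ∂ν, V x ≠ ⊤) :
    ∫⁻ x, F x ∂ν ≤ (∫⁻ x, F x ^ p * fracWeight p q u V x / u x ∂ν) ^ q⁻¹ *
      (∫⁻ x, F x ^ p * fracWeight p q u V x ∂ν) ^ β *
      (∫⁻ x, V x ∂ν) ^ ((p - 1) / q) * ν univ ^ ((p - 1) * β) := by
  let G : Fin 4 → Ω → ℝ≥0∞ := ![fun x => F x ^ p * fracWeight p q u V x / u x,
    fun x => F x ^ p * fracWeight p q u V x, V, fun _ => 1]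
  let r : Fin 4 → ℝ := ![q⁻¹, β, (p - 1) / q, (p - 1) * β]
  have hG : ∀ i ∈ Finset.univ, AEMeasurable (G i) ν := fun i _ => by
    fin_cases i <;> dsimp [G, fracWeight] <;> fun_prop
  have hr_sum : ∑ i, r i = 1 := by
    simp only [r, Fin.sum_univ_four, Matrix.cons_val]
    linear_combination h.div_add_mul_eq_one
  have hr_nonneg : ∀ i ∈ Finset.univ, 0 ≤ r i := fun i _ => by
    fin_cases i
    exacts [(inv_pos.2 h.q_pos).le, h.β_nonneg, h.sub_one_div_nonneg, h.sub_one_mul_nonneg]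
  have holder := lintegral_prod_norm_pow_le Finset.univ hG hr_sum hr_nonneg
  simp only [Fin.prod_univ_four, G, r, Matrix.cons_val, one_rpow, mul_one, lintegral_one] at holder
  refine (lintegral_congr_ae ?_).trans_le holder
  filter_upwards [hu_zero, hu_top, hV_zero, hV_top] with x hu₀ hu₁ hV₀ hV₁
  exact h.eq_mul_rpow_mul_rpow (F x) hu₀ hu₁ hV₀ hV₁

lemma mul_lt_of_rpow_mul_rpow_lt (h : SobolevExponents p q β) {V m D J : ℝ≥0∞}
    (hlt : V ^ (p / q) * m ^ (1 - β) <
      D * J ^ q⁻¹ * ((V * m) ^ ((p - 1) / q) * m ^ ((p - 1) * β))) :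
    V * m < D ^ q * J := by
  have hq : 0 < q⁻¹ := inv_pos.2 h.q_pos
  have hpq : 0 ≤ p / q := (div_pos h.p_pos h.q_pos).le
  have hsplit : V ^ (p / q) * m ^ (1 - β) =
      (V * m) ^ q⁻¹ * ((V * m) ^ ((p - 1) / q) * m ^ ((p - 1) * β)) := by
    have e₁ : q⁻¹ + (p - 1) / q = p / q := by ring
    have e₂ : p / q + (p - 1) * β = 1 - β := by linear_combination h.div_add_mul_eq_one
    rw [← mul_assoc, ← rpow_add_of_nonneg _ _ hq.le h.sub_one_div_nonneg, e₁,
      mul_rpow_of_nonneg _ _ hpq, mul_assoc, ← rpow_add_of_nonneg _ _ hpq h.sub_one_mul_nonneg, e₂]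
  have hroot : (V * m) ^ q⁻¹ < (D ^ q * J) ^ q⁻¹ := by
    rw [mul_rpow_of_nonneg (D ^ q) _ hq.le, rpow_rpow_inv h.q_pos.ne']
    exact lt_of_mul_lt_mul_right' (hsplit ▸ hlt)
  exact (rpow_lt_rpow_iff hq).1 hroot

end SobolevExponents

/-- The set where the fractional maximal function `sup μ(B) ^ (β - 1) ∫_B F`, over the balls `B` of
the family `S` that contain the point, exceeds `t W`, written without division. -/
def fracSuperlevel {X : Type*} [PseudoMetricSpace X] [MeasurableSpace X] (μ : Measure X) (β : ℝ)
    (S : Set (PosBall X)) (F W : X → ℝ≥0∞) (t : ℝ≥0∞) : Set X :=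
  {x | ∃ B ∈ S, x ∈ (B : Set X) ∧ t * W x * μ B ^ (1 - β) < ∫⁻ y in B, F y ∂μ}

lemma exists_measurable_le_setLIntegral_le {Ω ι : Type*} [MeasurableSpace Ω] (μ : Measure Ω)
    (F : Ω → ℝ≥0∞) {S : Set ι} (hS : S.Countable) (s : ι → Set Ω) :
    ∃ G, Measurable G ∧ G ≤ F ∧ ∀ i ∈ S, ∫⁻ x in s i, F x ∂μ ≤ ∫⁻ x in s i, G x ∂μ := by
  choose g hg_meas hg_le hg_eq using fun i =>
    exists_measurable_le_lintegral_eq (μ := μ.restrict (s i)) F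
  have := hS.to_subtype
  refine ⟨fun x => ⨆ i : S, g i x, .iSup fun i => hg_meas i, fun x => iSup_le fun i => hg_le i x,
    fun i hi => (hg_eq i).trans_le (lintegral_mono fun x => ?_)⟩
  exact le_iSup (fun j : S => g j x) ⟨i, hi⟩

section FracSuperlevel

variable {X : Type*} [PseudoMetricSpace X] [MeasurableSpace X] {μ : Measure X} {u V : X → ℝ≥0∞}
  {Cu Cv : ℝ≥0} {p q β : ℝ}

lemma SobolevExponents.setLIntegral_posBall_le (h : SobolevExponents p q β)
    (hu : MuckenhouptA1 μ u Cu) (hV : MuckenhouptA1 μ V Cv) {F : X → ℝ≥0∞} (hF : Measurable F)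
    {B : PosBall X} {x : X} (hx : ballEssInf μ V B ≤ V x) :
    ∫⁻ y in B, F y ∂μ ≤ (Cv ^ ((p - 1) / q) *
        (∫⁻ y, F y ^ p * fracWeight p q u V y ∂μ) ^ β) *
      (∫⁻ y in B, F y ^ p * fracWeight p q u V y / u y ∂μ) ^ q⁻¹ *
      ((V x * μ B) ^ ((p - 1) / q) * μ B ^ ((p - 1) * β)) := by
  have hmean : ∫⁻ y in B, V y ∂μ ≤ Cv * (V x * μ B) :=
    (hV.setLIntegral_le B).trans (by gcongr)
  have hpq := h.sub_one_div_nonneg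
  have hβ := h.β_nonneg
  have holder := h.lintegral_le_of_holder hF.aemeasurable hu.measurable.aemeasurable
    hV.measurable.aemeasurable (ae_restrict_of_ae (s := (B : Set X)) hu.ae_ne_zero)
    (ae_restrict_of_ae hu.ae_ne_top) (ae_restrict_of_ae hV.ae_ne_zero)
    (ae_restrict_of_ae hV.ae_ne_top)
  rw [Measure.restrict_apply_univ] at holder
  refine holder.trans ?_
  calc _ ≤ (∫⁻ y in B, F y ^ p * fracWeight p q u V y / u y ∂μ) ^ q⁻¹ *
        (∫⁻ y, F y ^ p * fracWeight p q u V y ∂μ) ^ β *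
        (Cv * (V x * μ B)) ^ ((p - 1) / q) * μ B ^ ((p - 1) * β) := by
        gcongr
        exact Measure.restrict_le_self
    _ = _ := by
      rw [mul_rpow_of_nonneg _ _ hpq]
      ring

lemma SobolevExponents.fracSuperlevel_ae_le_maximalSuperlevel [OpensMeasurableSpace X]
    (h : SobolevExponents p q β) (hu : MuckenhouptA1 μ u Cu) (hV : MuckenhouptA1 μ V Cv)
    {F : X → ℝ≥0∞} (hF : Measurable F) {S : Set (PosBall X)} (hS : S.Countable) {t : ℝ≥0∞}
    (ht₀ : t ≠ 0) (ht : t ≠ ⊤) :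
    (fracSuperlevel μ β S F (fun x => V x ^ (p / q)) t : Set X) ≤ᵐ[μ]
      (maximalSuperlevel μ S (fun x => (Cv ^ ((p - 1) / q) *
          (∫⁻ y, F y ^ p * fracWeight p q u V y ∂μ) ^ β / t) ^ q *
        (F x ^ p * fracWeight p q u V x / u x)) V : Set X) := by
  filter_upwards [ae_forall_ballEssInf_le (μ := μ) (u := V) hS] with x hx ⟨B, hB, hxB, hlt⟩
  refine ⟨B, hB, hxB, ?_⟩
  have hu_meas := hu.measurable
  have hV_meas := hV.measurable
  rw [lintegral_const_mul _ (by fun_prop)]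
  apply h.mul_lt_of_rpow_mul_rpow_lt
  have hlt_div := (ENNReal.lt_div_iff_mul_lt (.inl ht₀) (.inl ht)).2
    ((mul_comm _ _).trans_lt (mul_assoc t _ _ ▸ hlt))
  refine hlt_div.trans_le ((ENNReal.div_le_div_right
    (h.setLIntegral_posBall_le hu hV hF (hx B hB hxB)) t).trans_eq ?_)
  simp only [div_eq_mul_inv]
  ring

end FracSuperlevel

section FractionalWeakType

variable {E : Type*} [NormedAddCommGroup E] [NormedSpace ℝ E] [FiniteDimensional ℝ E]
  [MeasurableSpace E] [BorelSpace E] {μ : Measure E} [μ.IsAddHaarMeasure]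
  {u V : E → ℝ≥0∞} {Cu Cv : ℝ≥0} {p q β : ℝ}

theorem SobolevExponents.exists_setLIntegral_fracSuperlevel_le_of_countable
    (h : SobolevExponents p q β) (hu : MuckenhouptA1 μ u Cu) (hV : MuckenhouptA1 μ V Cv) :
    ∃ K : ℝ≥0∞, K ≠ ⊤ ∧ ∀ (F : E → ℝ≥0∞) (S : Set (PosBall E)) (t : ℝ≥0∞), Measurable F →
      S.Countable → t ≠ 0 → t ≠ ⊤ →
      (∫⁻ x in fracSuperlevel μ β S F (fun x => V x ^ (p / q)) t, u x * V x ∂μ) ^ q⁻¹ ≤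
        K / t * (∫⁻ x, F x ^ p * fracWeight p q u V x ∂μ) ^ p⁻¹ := by
  obtain ⟨K, hK, hweak⟩ := hu.exists_setLIntegral_maximalSuperlevel_le hV
  have hq : 0 < q⁻¹ := inv_pos.2 h.q_pos
  have hCv : ((Cv : ℝ≥0∞) ^ ((p - 1) / q)) ≠ ⊤ :=
    rpow_ne_top_of_nonneg h.sub_one_div_nonneg coe_ne_top
  refine ⟨K ^ q⁻¹ * Cv ^ ((p - 1) / q), mul_ne_top (rpow_ne_top_of_nonneg hq.le hK) hCv,
    fun F S t hF hS ht₀ ht => ?_⟩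
  have hu_meas := hu.measurable
  have hV_meas := hV.measurable
  set N := ∫⁻ x, F x ^ p * fracWeight p q u V x ∂μ with hN
  set D := Cv ^ ((p - 1) / q) * N ^ β / t with hD
  have hcancel : ∫⁻ x, D ^ q * (F x ^ p * fracWeight p q u V x / u x) * u x ∂μ = D ^ q * N := by
    rw [hN, ← lintegral_const_mul _ (by fun_prop)]
    refine lintegral_congr_ae ?_
    filter_upwards [hu.ae_ne_zero, hu.ae_ne_top] with x hx₀ hx
    rw [mul_assoc, ENNReal.div_mul_cancel hx₀ hx]
  have hbound : ∫⁻ x in fracSuperlevel μ β S F (fun x => V x ^ (p / q)) t, u x * V x ∂μ ≤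
      K * (D ^ q * N) := hcancel ▸
    (lintegral_mono' (Measure.restrict_mono_ae
      (h.fracSuperlevel_ae_le_maximalSuperlevel hu hV hF hS ht₀ ht)) le_rfl).trans
      (hweak _ S (by fun_prop) hS)
  calc _ ≤ (K * (D ^ q * N)) ^ q⁻¹ := rpow_le_rpow hbound hq.le
    _ = K ^ q⁻¹ * (D * N ^ q⁻¹) := by
      rw [mul_rpow_of_nonneg _ _ hq.le, mul_rpow_of_nonneg _ _ hq.le, rpow_rpow_inv h.q_pos.ne']
    _ = _ := by
      rw [← h.inv_add_eq, rpow_add_of_nonneg _ _ hq.le h.β_nonneg, hD]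
      simp only [div_eq_mul_inv]
      ring

lemma exists_measurable_fracSuperlevel_univ_subset (μ : Measure E) [μ.IsAddHaarMeasure]
    (hβ : β ≤ 1) (F W : E → ℝ≥0∞) (t : ℝ≥0∞) :
    ∃ (S : Set (PosBall E)) (G : E → ℝ≥0∞), S.Countable ∧ Measurable G ∧ G ≤ F ∧
      fracSuperlevel μ β univ F W t ⊆
        fracSuperlevel μ β S G W (t / (2 ^ finrank ℝ E) ^ (1 - β)) := by
  obtain ⟨S, hS, hcover⟩ := PosBall.exists_countable_forall_subset E
  obtain ⟨G, hG, hGF, hGint⟩ :=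
    exists_measurable_le_setLIntegral_le μ F hS fun B => (B : Set E)
  refine ⟨S, G, hS, hG, hGF, ?_⟩
  rintro x ⟨B, -, hxB, hlt⟩
  obtain ⟨B', hB', hsub, hradius⟩ := hcover B
  refine ⟨B', hB', hsub hxB, ?_⟩
  set c : ℝ≥0∞ := (2 ^ finrank ℝ E) ^ (1 - β)
  have hβ' : 0 ≤ 1 - β := sub_nonneg.2 hβ
  have hc₀ : c ≠ 0 := by simp [c]
  have hc : c ≠ ⊤ := rpow_ne_top_of_nonneg hβ' (by finiteness)
  have hmeas : μ B' ≤ 2 ^ finrank ℝ E * μ B := by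
    exact_mod_cast PosBall.measure_le_of_radius_le_mul μ (c := 2) (mod_cast hradius)
  calc t / c * W x * μ B' ^ (1 - β)
      ≤ t / c * W x * (c * μ B ^ (1 - β)) := by
        rw [← mul_rpow_of_nonneg _ _ hβ']
        gcongr
    _ = t / c * c * W x * μ B ^ (1 - β) := by ring
    _ = t * W x * μ B ^ (1 - β) := by rw [ENNReal.div_mul_cancel hc₀ hc]
    _ < ∫⁻ y in B, F y ∂μ := hlt
    _ ≤ ∫⁻ y in B', F y ∂μ := lintegral_mono_set hsub
    _ ≤ ∫⁻ y in B', G y ∂μ := hGint B' hB'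

theorem SobolevExponents.exists_setLIntegral_fracSuperlevel_le
    (h : SobolevExponents p q β) (hu : MuckenhouptA1 μ u Cu) (hV : MuckenhouptA1 μ V Cv) :
    ∃ K : ℝ≥0∞, K ≠ ⊤ ∧ ∀ (F : E → ℝ≥0∞) (t : ℝ≥0∞), t ≠ 0 → t ≠ ⊤ →
      (∫⁻ x in fracSuperlevel μ β univ F (fun x => V x ^ (p / q)) t, u x * V x ∂μ) ^ q⁻¹ ≤
        K / t * (∫⁻ x, F x ^ p * fracWeight p q u V x ∂μ) ^ p⁻¹ := by
  obtain ⟨K, hK, hweak⟩ := h.exists_setLIntegral_fracSuperlevel_le_of_countable hu hV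
  have hβ : 0 ≤ 1 - β := sub_nonneg.2 h.β_le_one
  have hp := h.p_pos
  set c : ℝ≥0∞ := (2 ^ finrank ℝ E) ^ (1 - β) with hc_def
  have hc₀ : c ≠ 0 := by simp [c]
  have hc : c ≠ ⊤ := rpow_ne_top_of_nonneg hβ (by finiteness)
  refine ⟨K * c, mul_ne_top hK hc, fun F t ht₀ ht => ?_⟩
  obtain ⟨S, G, hS, hG, hGF, hsub⟩ := exists_measurable_fracSuperlevel_univ_subset μ h.β_le_one F
    (fun x => V x ^ (p / q)) t
  rw [← hc_def] at hsub
  calc _ ≤ (∫⁻ x in fracSuperlevel μ β S G (fun x => V x ^ (p / q)) (t / c),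
        u x * V x ∂μ) ^ q⁻¹ := rpow_le_rpow (lintegral_mono_set hsub) (inv_pos.2 h.q_pos).le
    _ ≤ K / (t / c) * (∫⁻ x, G x ^ p * fracWeight p q u V x ∂μ) ^ p⁻¹ :=
      hweak G S _ hG hS (ENNReal.div_ne_zero.2 ⟨ht₀, hc⟩) (div_ne_top ht hc₀)
    _ = K * c / t * (∫⁻ x, G x ^ p * fracWeight p q u V x ∂μ) ^ p⁻¹ := by
      rw [ENNReal.div_eq_inv_mul, ENNReal.inv_div (.inl hc) (.inl hc₀)]
      simp only [div_eq_mul_inv]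
      ring
    _ ≤ _ := by
      gcongr with x
      exact hGF x

end FractionalWeakType

/-! ### Cubes in coordinates -/

section CoordinateCubes

variable {n : ℕ}

lemma isCube_iff_exists_posBall {Q : Set (ESp n)} :
    IsCube Q ↔ ∃ B : PosBall (Fin n → ℝ), Q = WithLp.ofLp ⁻¹' (B : Set (Fin n → ℝ)) := by
  have hmem (c : Fin n → ℝ) {r : ℝ} (hr : 0 < r) (x : ESp n) :
      WithLp.ofLp x ∈ closedBall c r ↔ ∀ i, c i - r ≤ x i ∧ x i ≤ c i + r := by
    simp only [mem_closedBall, dist_pi_le_iff hr.le, Real.dist_eq, abs_sub_le_iff]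
    exact forall_congr' fun i => by constructor <;> intro h <;> constructor <;> linarith [h.1, h.2]
  constructor
  · rintro ⟨c, s, hs, rfl⟩
    refine ⟨⟨fun i => c i + s / 2, s / 2, half_pos hs⟩, ?_⟩
    ext x
    simp only [mem_ofPred_eq, mem_preimage, hmem _ (half_pos hs), add_sub_cancel_right, add_assoc,
      add_halves]
  · rintro ⟨B, rfl⟩
    refine ⟨fun i => B.center i - B.radius, 2 * B.radius, by linarith [B.radius_pos], ?_⟩
    ext x
    simp only [mem_ofPred_eq, mem_preimage, hmem _ B.radius_pos, two_mul, ← add_assoc,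
      sub_add_cancel]

lemma measurableEmbedding_toLp : MeasurableEmbedding (WithLp.toLp 2 : (Fin n → ℝ) → ESp n) :=
  (MeasurableEquiv.toLp 2 (Fin n → ℝ)).measurableEmbedding

lemma measurePreserving_toLp_restrict (A : Set (Fin n → ℝ)) :
    MeasurePreserving (WithLp.toLp 2) (volume.restrict A)
      (volume.restrict (WithLp.ofLp ⁻¹' A : Set (ESp n))) :=
  (PiLp.volume_preserving_toLp (Fin n)).restrict_preimage_emb measurableEmbedding_toLp
    (WithLp.ofLp ⁻¹' A)

lemma setLIntegral_ofLp_preimage (A : Set (Fin n → ℝ)) (f : ESp n → ℝ≥0∞) :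
    ∫⁻ x in WithLp.ofLp ⁻¹' A, f x = ∫⁻ y in A, f (WithLp.toLp 2 y) :=
  ((measurePreserving_toLp_restrict A).lintegral_comp_emb measurableEmbedding_toLp f).symm

lemma volume_ofLp_preimage (A : Set (Fin n → ℝ)) :
    volume (WithLp.ofLp ⁻¹' A : Set (ESp n)) = volume A := by
  simpa only [setLIntegral_one] using setLIntegral_ofLp_preimage A fun _ => 1

lemma IsA1.exists_muckenhouptA1 {w : ESp n → ℝ} (hA1 : IsA1 w) (hw : Measurable w)
    (hpos : ∀ᵐ x, 0 < w x) :
    ∃ C : ℝ≥0, MuckenhouptA1 volume (fun y => ENNReal.ofReal (w (WithLp.toLp 2 y))) C := by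
  obtain ⟨C, hC, hbound⟩ := hA1
  refine ⟨C.toNNReal, by fun_prop, ?_, .of_forall fun _ => ofReal_ne_top, fun B => ?_⟩
  · filter_upwards [(PiLp.volume_preserving_toLp (Fin n)).quasiMeasurePreserving.ae hpos] with y hy
    exact (ofReal_pos.2 hy).ne'
  have hess : essInf (fun x => ENNReal.ofReal (w x)) (volume.restrict (WithLp.ofLp ⁻¹' B)) ≤
      ballEssInf volume (fun y => ENNReal.ofReal (w (WithLp.toLp 2 y))) B :=
    le_essInf_of_ae_le _
      ((measurePreserving_toLp_restrict (B : Set (Fin n → ℝ))).quasiMeasurePreserving.ae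
        ae_essInf_le)
  have hmean := hbound _ (isCube_iff_exists_posBall.2 ⟨B, rfl⟩)
  rw [volume_ofLp_preimage, wMeas, setLIntegral_ofLp_preimage, ← ENNReal.div_eq_inv_mul,
    ENNReal.div_le_iff (B.measure_ne_zero volume) (B.measure_ne_top volume)] at hmean
  rw [coe_toNNReal hC.ne, ← mul_assoc]
  exact hmean.trans (by gcongr)

lemma lt_fracM_div_iff {α : ℝ} {F : ESp n → ℝ} {a t : ℝ≥0∞} (ha₀ : a ≠ 0) (ha : a ≠ ⊤)
    {x : ESp n} :
    t < fracM α F x / a ↔ ∃ B : PosBall (Fin n → ℝ), WithLp.ofLp x ∈ (B : Set (Fin n → ℝ)) ∧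
      t * a * volume (B : Set (Fin n → ℝ)) ^ (1 - α / n) <
        ∫⁻ y in B, ENNReal.ofReal |F (WithLp.toLp 2 y)| := by
  have haverage (B : PosBall (Fin n → ℝ)) (I : ℝ≥0∞) :
      t * a < (volume (B : Set (Fin n → ℝ)) ^ (1 - α / n))⁻¹ * I ↔
        t * a * volume (B : Set (Fin n → ℝ)) ^ (1 - α / n) < I := by
    have hB₀ := B.measure_ne_zero volume
    have hB := B.measure_ne_top volume
    rw [← ENNReal.div_eq_inv_mul, ENNReal.lt_div_iff_mul_lt] <;> simp [hB₀, hB]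
  rw [ENNReal.lt_div_iff_mul_lt (.inl ha₀) (.inl ha), fracM]
  simp only [lt_iSup_iff, isCube_iff_exists_posBall, exists_prop]
  constructor
  · rintro ⟨_, ⟨B, rfl⟩, hxB, hlt⟩
    rw [volume_ofLp_preimage, setLIntegral_ofLp_preimage, haverage] at hlt
    exact ⟨B, hxB, hlt⟩
  · rintro ⟨B, hxB, hlt⟩
    refine ⟨_, ⟨B, rfl⟩, hxB, ?_⟩
    rwa [volume_ofLp_preimage, setLIntegral_ofLp_preimage, haverage]

lemma wMeas_lt_fracM_div_eq {α : ℝ} {F w v : ESp n → ℝ} (hv : ∀ᵐ x, 0 < v x) (t : ℝ≥0∞) :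
    wMeas w {x | t < fracM α F x / ENNReal.ofReal (v x)} =
      ∫⁻ y in fracSuperlevel volume (α / n) univ
        (fun y => ENNReal.ofReal |F (WithLp.toLp 2 y)|)
        (fun y => ENNReal.ofReal (v (WithLp.toLp 2 y))) t,
      ENNReal.ofReal (w (WithLp.toLp 2 y)) := by
  rw [wMeas, ← setLIntegral_ofLp_preimage _ fun x => ENNReal.ofReal (w x)]
  refine setLIntegral_congr (eventuallyEq_set.2 ?_)
  filter_upwards [hv] with x hx
  simp only [mem_ofPred_eq, lt_fracM_div_iff (ofReal_pos.2 hx).ne' ofReal_ne_top, fracSuperlevel,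
    mem_preimage, mem_univ, true_and]

end CoordinateCubes

lemma ofReal_mul_eq_rpow_mul_fracWeight {X : Type*} {p q : ℝ} (hp : 0 < p) (hq : 0 < q)
    {u v : X → ℝ} {x : X} (hu : 0 ≤ u x) (hv : 0 < v x) (a : ℝ) :
    ENNReal.ofReal (|a| ^ p * u x ^ (p / q) * v x) = ENNReal.ofReal |a * v x| ^ p *
      fracWeight p q (fun y => ENNReal.ofReal (u y))
        (fun y => ENNReal.ofReal (v y ^ (q / p))) x := by
  have hpq : 0 ≤ p / q := by positivity
  have hvq : 0 < v x ^ (q / p) := by positivity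
  rw [fracWeight, ofReal_rpow_of_pos hvq, ← ofReal_mul hu,
    ofReal_rpow_of_nonneg (by positivity) hpq, ofReal_rpow_of_nonneg (abs_nonneg _) hp.le,
    ← ofReal_mul (by positivity), abs_mul, abs_of_pos hv, Real.mul_rpow (abs_nonneg a) hv.le,
    Real.mul_rpow hu (by positivity), ← Real.rpow_mul hv.le, ← Real.rpow_mul hv.le]
  have hexp : p + q / p * (1 - p) * (p / q) = 1 := by
    field_simp
    ring
  congr 1
  calc |a| ^ p * u x ^ (p / q) * v x
      = |a| ^ p * u x ^ (p / q) * v x ^ (p + q / p * (1 - p) * (p / q)) := by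
        rw [hexp, Real.rpow_one]
    _ = _ := by
      rw [Real.rpow_add hv]
      ring

theorem BCP_fractional_maximal_general {n : ℕ} (α p q : ℝ) (hα0 : 0 ≤ α) (hp1 : 1 ≤ p)
    (hαp : α * p < n) (hq : 1 / q = 1 / p - α / (n : ℝ))
    (u v : ESp n → ℝ) (hu : IsWeight u) (hv : IsWeight v)
    (hu1 : IsA1 u) (hv1 : IsA1 (fun x => v x ^ (q / p))) :
    ∃ C : ℝ≥0∞, 0 < C ∧ C < ⊤ ∧
      ∀ (f : ESp n → ℝ) (t : ℝ), 0 < t →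
        (wMeas (fun x => u x * v x ^ (q / p))
            {x : ESp n | ENNReal.ofReal t <
              fracM α (fun y => f y * v y) x / ENNReal.ofReal (v x)}) ^ (1 / q)
          ≤ (C / ENNReal.ofReal t) *
              (∫⁻ x, ENNReal.ofReal (|f x| ^ p * u x ^ (p / q) * v x)) ^ (1 / p) := by
  have hexp : SobolevExponents p q (α / n) := .of_mul_lt hα0 hp1 hαp hq
  obtain ⟨hu_meas, hu_nonneg, hu_pos, -⟩ := hu
  obtain ⟨hv_meas, hv_nonneg, hv_pos, -⟩ := hv
  obtain ⟨Cu, hU⟩ := hu1.exists_muckenhouptA1 hu_meas hu_pos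
  obtain ⟨Cv, hV⟩ := hv1.exists_muckenhouptA1 (hv_meas.pow_const _)
    (hv_pos.mono fun x hx => Real.rpow_pos_of_pos hx _)
  obtain ⟨K, hK, hweak⟩ := hexp.exists_setLIntegral_fracSuperlevel_le hU hV
  refine ⟨K + 1, by simp, by finiteness, fun f t ht => ?_⟩
  have hqp : 0 < q / p := div_pos hexp.q_pos hexp.p_pos
  have hroot (x : ESp n) : ENNReal.ofReal (v x ^ (q / p)) ^ (p / q) = ENNReal.ofReal (v x) := by
    rw [← ofReal_rpow_of_nonneg (hv_nonneg x) hqp.le, ← inv_div q p, rpow_rpow_inv hqp.ne']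
  have hnorm : ∫⁻ x, ENNReal.ofReal (|f x| ^ p * u x ^ (p / q) * v x) = _ :=
    (lintegral_congr_ae (hv_pos.mono fun x hx => ofReal_mul_eq_rpow_mul_fracWeight hexp.p_pos
      hexp.q_pos (hu_nonneg x) hx (f x))).trans
      ((PiLp.volume_preserving_toLp (Fin n)).lintegral_comp_emb measurableEmbedding_toLp _).symm
  simp only [wMeas_lt_fracM_div_eq hv_pos, ofReal_mul (hu_nonneg _), one_div, hnorm]
  simp only [hroot] at hweak
  exact (hweak _ _ (ofReal_pos.2 ht).ne' ofReal_ne_top).trans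
    (mul_le_mul' (ENNReal.div_le_div_right le_self_add _) le_rfl)

/-- **Berra–Carena–Pradolini, fractional maximal case.**  Let `0 < α < n`, `1 ≤ p < n/α`
and `1/q = 1/p - α/n`.  If `u ∈ A₁` and `v^{q/p} ∈ A₁`, then there is `C > 0` such that
for every `f` and `t > 0`,
`(uv^{q/p})({x : M_α(fv)(x)/v(x) > t})^{1/q} ≤ (C/t) (∫ |f|^p u^{p/q} v)^{1/p}`. -/
theorem BCP_fractional_maximal {n : ℕ} (hn : 0 < n) (α p q : ℝ)
    (hα0 : 0 < α) (hα : α < (n : ℝ)) (hp1 : 1 ≤ p) (hp2 : p < (n : ℝ) / α)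
    (hq : 1 / q = 1 / p - α / (n : ℝ))
    (u v : ESp n → ℝ) (hu : IsWeight u) (hv : IsWeight v)
    (hu1 : IsA1 u) (hv1 : IsA1 (fun x => v x ^ (q / p))) :
    ∃ C : ℝ≥0∞, 0 < C ∧ C < ⊤ ∧
      ∀ (f : ESp n → ℝ) (t : ℝ), 0 < t →
        (wMeas (fun x => u x * v x ^ (q / p))
            {x : ESp n | ENNReal.ofReal t <
              fracM α (fun y => f y * v y) x / ENNReal.ofReal (v x)}) ^ (1 / q)
          ≤ (C / ENNReal.ofReal t) *
              (∫⁻ x, ENNReal.ofReal (|f x| ^ p * u x ^ (p / q) * v x)) ^ (1 / p) :=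
  BCP_fractional_maximal_general α p q hα0.le hp1 ((lt_div_iff₀' hα0).1 hp2) hq u v hu hv hu1 hv1

end
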